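/- arXiv:2108.04765 — 2 statements merged into one kernel-verified Lean document; each statement's English description precedes it below -/
import Mathlib

section
/- (Continuum rewriting of the discrete multipole expansion.) Suppose the lattice operator H is stable and admits a lattice Green's function 𝒢, and let (G_n) be kernels with the properties of the Green's-function expansion. Let p ≥ 1, let 𝒮 ⊂ Λ be a lattice basis, and let b^{(i,k)} ∈ (ℝ^𝒮)^{⊙i} be symmetric arrays for 0 ≤ i ≤ p−1 and 1 ≤ k ≤ N. Then there exist symmetric tensors a^{(i,n,k)} ∈ (ℝ^d)^{⊗i} such that the function w^{MP} := ∑_{i=0}^{p−1}∑_{k=1}^{N} b^{(i,k)} : D_𝒮^i 𝒢_k − ∑_{k=1}^{N}∑_{n=0}^{⌊(p−1)/2⌋}∑_{i=0}^{p−1−2n} a^{(i,n,k)} : ∇^i(G_n e_k)|_Λ (continuum terms set to 0 at ℓ = 0) satisfies, for every j ∈ ℕ₀, |D^j w^{MP}(ℓ)| ≤ C_j⟨ℓ⟩^{2−d−j−p} for all ℓ ∈ Λ. -/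
noncomputable section

open scoped BigOperators
open MeasureTheory Filter Topology

namespace Defect

abbrev Vec (n : ℕ) : Type := Fin n → ℝ

/-- Euclidean norm of a vector in `ℝ^n`. -/
def enorm {n : ℕ} (v : Vec n) : ℝ := Real.sqrt (∑ i, (v i) ^ 2)

/-- `⟨x⟩ := |x| + 2`. -/
def ang {n : ℕ} (v : Vec n) : ℝ := enorm v + 2

def dotV {n : ℕ} (x y : Vec n) : ℝ := ∑ i, x i * y i

/-- Matrix-vector product for a plain `Fin N → Fin N → ℝ` matrix. -/
def mulV {N : ℕ} (M : Fin N → Fin N → ℝ) (v : Vec N) : Vec N := fun i => ∑ j, M i j * v j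

/-- Euclidean (Frobenius) norm of an `N × N` array. -/
def mnorm {N : ℕ} (M : Fin N → Fin N → ℝ) : ℝ := Real.sqrt (∑ i, ∑ j, (M i j) ^ 2)

/-- The lattice point `A z` for `z ∈ ℤ^d`. -/
def latticePt (d : ℕ) (A : Matrix (Fin d) (Fin d) ℝ) (z : Fin d → ℤ) : Vec d :=
  fun i => ∑ j, A i j * (z j : ℝ)

/-- The Bravais lattice `Λ = A ℤ^d`. -/
def Lattice (d : ℕ) (A : Matrix (Fin d) (Fin d) ℝ) : Set (Vec d) :=
  Set.range (latticePt d A)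

/-- First-order finite difference `D_ρ u (ℓ) = u(ℓ+ρ) - u(ℓ)`. -/
def D1 {d : ℕ} {M : Type} [AddCommGroup M] (ρ : Vec d) (u : Vec d → M) (ℓ : Vec d) : M :=
  u (ℓ + ρ) - u ℓ

/-- Iterated finite difference `D_{ρ₁} ⋯ D_{ρ_j} u (ℓ)` (closed form). -/
def Dmulti {d : ℕ} {M : Type} [AddCommGroup M] [Module ℝ M] {j : ℕ}
    (ρs : Fin j → Vec d) (u : Vec d → M) (ℓ : Vec d) : M :=
  ∑ S : Finset (Fin j), ((-1 : ℝ) ^ (j - S.card)) • u (ℓ + ∑ i ∈ S, ρs i)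

/-- `|Du(ℓ)|²`, the squared Euclidean norm of the stencil of first differences. -/
def Dnorm1Sq {d N : ℕ} (R : Finset (Vec d)) (u : Vec d → Vec N) (ℓ : Vec d) : ℝ :=
  ∑ ρ ∈ R, (enorm (D1 ρ u ℓ)) ^ 2

/-- `|D^j u(ℓ)|`, the Euclidean norm of the array `(D_{ρ⃗} u(ℓ))_{ρ⃗ ∈ R^j}`. -/
def DnormJ {d N : ℕ} (R : Finset (Vec d)) (j : ℕ) (u : Vec d → Vec N) (ℓ : Vec d) : ℝ :=
  Real.sqrt (∑ ρs : Fin j → {x // x ∈ R},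
    (enorm (Dmulti (fun i => (ρs i : Vec d)) u ℓ)) ^ 2)

/-- The linearized lattice operator
`H[u](ℓ) = ∑_{σ,ρ∈R} (C_{σρ} D_ρ u(ℓ-σ) - C_{σρ} D_ρ u(ℓ))`. -/
def Hop (d N : ℕ) (R : Finset (Vec d)) (C : Vec d → Vec d → Fin N → Fin N → ℝ)
    (u : Vec d → Vec N) (ℓ : Vec d) : Vec N :=
  ∑ σ ∈ R, ∑ ρ ∈ R, (mulV (C σ ρ) (D1 ρ u (ℓ - σ)) - mulV (C σ ρ) (D1 ρ u ℓ))

/-- `u ∈ 𝓗¹`. -/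
def InH1 {d N : ℕ} (A : Matrix (Fin d) (Fin d) ℝ) (R : Finset (Vec d))
    (u : Vec d → Vec N) : Prop :=
  Summable fun z : Fin d → ℤ => Dnorm1Sq R u (latticePt d A z)

/-- `u ∈ 𝓗ᶜ` : the stencil `Du` has bounded support on the lattice. -/
def InHc {d N : ℕ} (A : Matrix (Fin d) (Fin d) ℝ) (R : Finset (Vec d))
    (u : Vec d → Vec N) : Prop :=
  ∃ rad : ℝ, ∀ z : Fin d → ℤ, rad ≤ enorm (latticePt d A z) →
    ∀ ρ ∈ R, D1 ρ u (latticePt d A z) = 0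

/-- Stability of the lattice operator `H`. -/
def IsStable (d N : ℕ) (A : Matrix (Fin d) (Fin d) ℝ) (R : Finset (Vec d))
    (C : Vec d → Vec d → Fin N → Fin N → ℝ) : Prop :=
  ∃ c₀ : ℝ, 0 < c₀ ∧ ∀ u : Vec d → Vec N, InHc A R u →
    c₀ * (∑' z : Fin d → ℤ, Dnorm1Sq R u (latticePt d A z)) ≤
      ∑' z : Fin d → ℤ, ∑ σ ∈ R, ∑ ρ ∈ R,
        dotV (D1 σ u (latticePt d A z)) (mulV (C σ ρ) (D1 ρ u (latticePt d A z)))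

/-- `k`-th column of a matrix-valued function. -/
def col {d N : ℕ} (G : Vec d → Fin N → Fin N → ℝ) (k : Fin N) : Vec d → Vec N :=
  fun x i => G x i k

/-- `|D^j 𝒢(ℓ)|` for matrix-valued `𝒢`. -/
def DnormJmat {d N : ℕ} (R : Finset (Vec d)) (j : ℕ)
    (G : Vec d → Fin N → Fin N → ℝ) (ℓ : Vec d) : ℝ :=
  Real.sqrt (∑ k : Fin N, (DnormJ R j (col G k) ℓ) ^ 2)

/-- `𝒢` is a lattice Green's function for `H`. -/
def IsLatticeGreen (d N : ℕ) (A : Matrix (Fin d) (Fin d) ℝ) (R : Finset (Vec d))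
    (C : Vec d → Vec d → Fin N → Fin N → ℝ) (G : Vec d → Fin N → Fin N → ℝ) : Prop :=
  (∀ (k : Fin N) (z : Fin d → ℤ),
      Hop d N R C (col G k) (latticePt d A z) =
        if latticePt d A z = 0 then Pi.single k 1 else 0) ∧
  (∀ j : ℕ, 1 ≤ j → ∃ cj : ℝ, ∀ z : Fin d → ℤ,
      DnormJmat R j G (latticePt d A z) ≤
        cj * ang (latticePt d A z) ^ ((2 : ℝ) - d - j))

/-- A symmetric array `b ∈ (ℝ^{Fin d})^{⊙ i}`. -/
def SymArr {d i : ℕ} (b : (Fin i → Fin d) → ℝ) : Prop :=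
  ∀ (π : Equiv.Perm (Fin i)) (σv : Fin i → Fin d), b (σv ∘ π) = b σv

/-- `b : D_𝒮^i f`, a multipole term built from the basis `s`. -/
def multipole (d N : ℕ) (s : Fin d → Vec d) (i : ℕ) (b : (Fin i → Fin d) → ℝ)
    (f : Vec d → Vec N) : Vec d → Vec N :=
  fun ℓ => ∑ σv : Fin i → Fin d, b σv • Dmulti (fun m => s (σv m)) f ℓ

/-- Iterated partial derivative `∂_{j₁} ⋯ ∂_{j_i} f (x)`. -/
def pderivMulti {d : ℕ} (i : ℕ) (js : Fin i → Fin d) (f : Vec d → ℝ) (x : Vec d) : ℝ :=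
  iteratedFDeriv ℝ i f x (fun m => Pi.single (js m) (1 : ℝ))

/-- `a : ∇^i f (x)` for a tensor `a ∈ (ℝ^d)^{⊗ i}`. -/
def aContract {d : ℕ} (i : ℕ) (a : (Fin i → Fin d) → ℝ) (f : Vec d → ℝ) (x : Vec d) : ℝ :=
  ∑ js : Fin i → Fin d, a js * pderivMulti i js f x

/-- Elementary tensor `σ⃗^⊗` as an array. -/
def tensorPow {d k : ℕ} (σs : Fin k → Vec d) : (Fin k → Fin d) → ℝ :=
  fun js => ∏ m, σs m (js m)

/-- Symmetric tensor product `σ⃗^⊙`. -/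
def symTensor {d k : ℕ} (σs : Fin k → Vec d) : (Fin k → Fin d) → ℝ :=
  fun js => ((k.factorial : ℝ))⁻¹ * ∑ π : Equiv.Perm (Fin k), tensorPow (σs ∘ π) js

/-- A symmetric tensor (array invariant under index permutations). -/
def SymTensor {d k : ℕ} (T : (Fin k → Fin d) → ℝ) : Prop :=
  ∀ (π : Equiv.Perm (Fin k)) (js : Fin k → Fin d), T (js ∘ π) = T js

/-- `∂V/∂g_ρ (gs)` as a vector in `ℝ^N`. -/
def gradV {d N : ℕ} (R : Finset (Vec d)) (V : ({x // x ∈ R} → Vec N) → ℝ)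
    (ρ : {x // x ∈ R}) (gs : {x // x ∈ R} → Vec N) : Vec N :=
  fun i => fderiv ℝ V gs (Pi.single ρ (Pi.single i 1))

/-- The finite-difference stencil `Du(ℓ) = (D_ρ u(ℓ))_{ρ ∈ R}`. -/
def Dstencil {d N : ℕ} (R : Finset (Vec d)) (u : Vec d → Vec N) (ℓ : Vec d) :
    {x // x ∈ R} → Vec N :=
  fun ρ => D1 (ρ : Vec d) u ℓ

/-- `C_{σρ} = ∂²V/∂g_σ ∂g_ρ (0)`. -/
def CofV {d N : ℕ} (R : Finset (Vec d)) (V : ({x // x ∈ R} → Vec N) → ℝ)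
    (σ ρ : Vec d) (i j : Fin N) : ℝ :=
  if hσ : σ ∈ R then
    if hρ : ρ ∈ R then
      iteratedFDeriv ℝ 2 V 0
        ![Pi.single ⟨σ, hσ⟩ (Pi.single i 1), Pi.single ⟨ρ, hρ⟩ (Pi.single j 1)]
    else 0
  else 0

/-- Summand of the first variation `δE(u)[v]` at a site. -/
def deltaEsite {d N : ℕ} (R : Finset (Vec d)) (V : ({x // x ∈ R} → Vec N) → ℝ)
    (u v : Vec d → Vec N) (ℓ : Vec d) : ℝ :=
  ∑ ρ ∈ R.attach, dotV (gradV R V ρ (Dstencil R u ℓ)) (D1 (ρ : Vec d) v ℓ)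

/-- The pointwise atomistic force `δE(u)(ℓ)`. -/
def deltaEpt {d N : ℕ} (R : Finset (Vec d)) (V : ({x // x ∈ R} → Vec N) → ℝ)
    (u : Vec d → Vec N) (ℓ : Vec d) : Vec N :=
  ∑ ρ ∈ R.attach,
    (gradV R V ρ (Dstencil R u (ℓ - (ρ : Vec d))) - gradV R V ρ (Dstencil R u ℓ))

/-- Point symmetry of the site potential. -/
def PointSym {d N : ℕ} (R : Finset (Vec d)) (hRsym : ∀ ρ ∈ R, -ρ ∈ R)
    (V : ({x // x ∈ R} → Vec N) → ℝ) : Prop :=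
  ∀ gs : {x // x ∈ R} → Vec N,
    V (fun ρ => -(gs ⟨-(ρ : Vec d), hRsym _ ρ.2⟩)) = V gs

/-- The Cauchy–Born elasticity tensor `ℂ_{iajb}`. -/
def CB {d N : ℕ} (A : Matrix (Fin d) (Fin d) ℝ) (R : Finset (Vec d))
    (C : Vec d → Vec d → Fin N → Fin N → ℝ)
    (i : Fin N) (a : Fin d) (j : Fin N) (b : Fin d) : ℝ :=
  (|A.det|)⁻¹ * ∑ ρ ∈ R, ∑ σ ∈ R, C ρ σ i j * ρ a * σ b

/-- Positive homogeneity of degree `deg` (away from the origin). -/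
def PosHomMat {d N : ℕ} (f : Vec d → Fin N → Fin N → ℝ) (deg : ℝ) : Prop :=
  ∀ t : ℝ, 0 < t → ∀ x : Vec d, x ≠ 0 → ∀ i k, f (t • x) i k = t ^ deg * f x i k

/-- The defining properties of the continuum kernel family `(G_n)`. -/
def KernelFamily (d N : ℕ) (A : Matrix (Fin d) (Fin d) ℝ) (R : Finset (Vec d))
    (G : Vec d → Fin N → Fin N → ℝ) (Gn : ℕ → Vec d → Fin N → Fin N → ℝ) : Prop :=
  (∀ n : ℕ, ContDiffOn ℝ (⊤ : ℕ∞) (Gn n) {x : Vec d | x ≠ 0}) ∧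
  (∀ n : ℕ, 1 ≤ n ∨ 3 ≤ d →
      PosHomMat (Gn n) ((2 : ℝ) - 2 * n - d)) ∧
  (d = 2 → ∃ (M : Fin N → Fin N → ℝ) (φ : Vec d → Fin N → Fin N → ℝ),
      ContDiffOn ℝ (⊤ : ℕ∞) φ {x : Vec d | x ≠ 0} ∧ PosHomMat φ 0 ∧
      ∀ x : Vec d, x ≠ 0 → ∀ i k,
        Gn 0 x i k = M i k * Real.log (enorm x) + φ x i k) ∧
  (∀ j p : ℕ, ∃ Cjp : ℝ, ∀ (ρs : Fin j → {x // x ∈ R}) (z : Fin d → ℤ),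
      (∀ S : Finset (Fin j), latticePt d A z + ∑ i ∈ S, (ρs i : Vec d) ≠ 0) →
      mnorm (Dmulti (fun m => (ρs m : Vec d))
          (fun x i k => G x i k - ∑ n ∈ Finset.range (p + 1), Gn n x i k)
          (latticePt d A z)) ≤
        Cjp * ang (latticePt d A z) ^ (-(2 : ℝ) * p - d - j))

open scoped ContDiff

/-- Iterated directional derivatives. -/
def pd {d : ℕ} (vs : List (Vec d)) (f : Vec d → ℝ) : Vec d → ℝ :=
  vs.foldr (fun v g x => fderiv ℝ g x v) f

lemma pd_nil {d : ℕ} (f : Vec d → ℝ) : pd [] f = f := rfl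

lemma pd_cons {d : ℕ} (v : Vec d) (vs : List (Vec d)) (f : Vec d → ℝ) :
    pd (v :: vs) f = fun x => fderiv ℝ (pd vs f) x v := rfl

lemma pd_append {d : ℕ} (vs ws : List (Vec d)) (f : Vec d → ℝ) :
    pd (vs ++ ws) f = pd vs (pd ws f) := by
  simp [pd, List.foldr_append]

lemma pd_contDiffOn {d : ℕ} {U : Set (Vec d)} (hU : IsOpen U) (vs : List (Vec d))
    {f : Vec d → ℝ} (hf : ContDiffOn ℝ ∞ f U) : ContDiffOn ℝ ∞ (pd vs f) U := by
  induction vs with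
  | nil => exact hf
  | cons v vs ih =>
    rw [pd_cons]
    exact (ih.fderiv_of_isOpen hU (by simp)).clm_apply contDiffOn_const

lemma pd_differentiableAt {d : ℕ} {U : Set (Vec d)} (hU : IsOpen U) (vs : List (Vec d))
    {f : Vec d → ℝ} (hf : ContDiffOn ℝ ∞ f U) {x : Vec d} (hx : x ∈ U) :
    DifferentiableAt ℝ (pd vs f) x :=
  ((pd_contDiffOn hU vs hf).differentiableOn (by simp)).differentiableAt (hU.mem_nhds hx)

lemma pd_D1 {d : ℕ} {U V : Set (Vec d)} (hU : IsOpen U) (hV : IsOpen V) (ρ : Vec d)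
    (h1 : ∀ x ∈ V, x ∈ U) (h2 : ∀ x ∈ V, x + ρ ∈ U) (vs : List (Vec d))
    {f : Vec d → ℝ} (hf : ContDiffOn ℝ ∞ f U) :
    ∀ x ∈ V, pd vs (D1 ρ f) x = D1 ρ (pd vs f) x := by
  induction vs with
  | nil => intro x _; rfl
  | cons v vs ih =>
    intro x hx
    have he : pd vs (D1 ρ f) =ᶠ[𝓝 x] fun y => pd vs f (y + ρ) - pd vs f y := by
      filter_upwards [hV.mem_nhds hx] with y hy
      exact ih y hy
    have e1 := pd_differentiableAt hU vs hf (h1 x hx)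
    have e2 := pd_differentiableAt hU vs hf (h2 x hx)
    have e3 : DifferentiableAt ℝ (fun y => pd vs f (y + ρ)) x :=
      (differentiableAt_comp_add_right ρ).2 e2
    simp only [pd_cons, D1]
    rw [he.fderiv_eq, fderiv_fun_sub e3 e1, fderiv_comp_add_right]
    rfl

lemma taylor_bound {d : ℕ} {U : Set (Vec d)} (hU : IsOpen U) (τ x : Vec d)
    (hseg : ∀ t ∈ Set.Icc (0 : ℝ) 1, x + t • τ ∈ U) (B : ℝ) (P : ℕ) :
    ∀ (f : Vec d → ℝ), ContDiffOn ℝ ∞ f U →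
      (∀ t ∈ Set.Icc (0 : ℝ) 1, |pd (List.replicate P τ) f (x + t • τ)| ≤ B) →
      ∀ t ∈ Set.Icc (0 : ℝ) 1,
        |f (x + t • τ) - ∑ i ∈ Finset.range P,
          t ^ i / (i.factorial : ℝ) * pd (List.replicate i τ) f x| ≤ B := by
  induction P with
  | zero => intro f hf hB t ht; simpa [pd_nil] using hB t ht
  | succ P ih =>
    intro f hf hB
    have hcomm : ∀ i, pd (List.replicate (i + 1) τ) f = pd (List.replicate i τ) (pd [τ] f) := by
      intro i
      rw [List.replicate_succ', pd_append]
    have ih' := ih (pd [τ] f) (pd_contDiffOn hU [τ] hf) (by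
      intro t ht; rw [← hcomm]; exact hB t ht)
    set F : ℝ → ℝ := fun t => f (x + t • τ) - ∑ i ∈ Finset.range (P + 1),
          t ^ i / (i.factorial : ℝ) * pd (List.replicate i τ) f x with hF
    have hder : ∀ t ∈ Set.Icc (0 : ℝ) 1, HasDerivAt F
        (pd [τ] f (x + t • τ) - ∑ i ∈ Finset.range P,
          t ^ i / (i.factorial : ℝ) * pd (List.replicate i τ) (pd [τ] f) x) t := by
      intro t ht
      have h1 : HasDerivAt (fun t : ℝ => f (x + t • τ)) (pd [τ] f (x + t • τ)) t := by
        have hd := (pd_differentiableAt hU [] hf (hseg t ht)).hasFDerivAt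
        have hl : HasDerivAt (fun t : ℝ => x + t • τ) τ t := by
          simpa using ((hasDerivAt_id t).smul_const τ).const_add x
        exact hd.comp_hasDerivAt t hl
      have h2 : HasDerivAt (fun t : ℝ => ∑ i ∈ Finset.range (P + 1),
          t ^ i / (i.factorial : ℝ) * pd (List.replicate i τ) f x)
          (∑ i ∈ Finset.range P,
          t ^ i / (i.factorial : ℝ) * pd (List.replicate i τ) (pd [τ] f) x) t := by
        have h3 : HasDerivAt (fun t : ℝ => ∑ i ∈ Finset.range (P + 1),
          t ^ i / (i.factorial : ℝ) * pd (List.replicate i τ) f x)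
          (∑ i ∈ Finset.range (P + 1), (i * t ^ (i - 1)) / (i.factorial : ℝ) *
            pd (List.replicate i τ) f x) t := by
          apply HasDerivAt.fun_sum
          intro i _
          exact ((hasDerivAt_pow i t).div_const _).mul_const _
        convert h3 using 1
        rw [Finset.sum_range_succ']
        simp only [Nat.cast_zero, zero_mul, zero_div, add_zero]
        apply Finset.sum_congr rfl
        intro i _
        rw [hcomm, Nat.factorial_succ]
        push_cast
        have : (i.factorial : ℝ) ≠ 0 := by positivity
        have : (i : ℝ) + 1 ≠ 0 := by positivity
        field_simp
      exact h1.sub h2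
    intro t ht
    have hmv := norm_image_sub_le_of_norm_deriv_le_segment' (f := F) (a := 0) (b := 1) (C := B)
      (fun t ht => (hder t ht).hasDerivWithinAt)
      (fun t ht => ih' t ⟨ht.1, ht.2.le⟩) t ht
    have hF0 : F 0 = 0 := by
      simp [hF, Finset.sum_range_succ', pd_nil]
    rw [hF0, sub_zero, sub_zero, Real.norm_eq_abs] at hmv
    have hB0 : 0 ≤ B := (abs_nonneg _).trans (hB t ht)
    calc |F t| ≤ B * t := hmv
      _ ≤ B := mul_le_of_le_one_right hB0 ht.2

lemma rpow_compare {a b c : ℝ} (ha : 0 < a) (hc : 1 ≤ c) (h1 : a ≤ c * b) (h2 : b ≤ c * a)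
    (e : ℝ) : b ^ e ≤ c ^ |e| * a ^ e := by
  have hc0 : 0 < c := by linarith
  have hb : 0 < b := by
    by_contra h
    push Not at h
    nlinarith
  rcases le_total 0 e with he | he
  · rw [abs_of_nonneg he, ← Real.mul_rpow hc0.le ha.le]
    exact Real.rpow_le_rpow hb.le h2 he
  · rw [abs_of_nonpos he, Real.rpow_neg hc0.le, ← Real.inv_rpow hc0.le,
      ← Real.mul_rpow (by positivity) ha.le]
    apply Real.rpow_le_rpow_of_nonpos (by positivity) _ he
    rw [inv_mul_le_iff₀ hc0]
    exact h1

/-- Symbol-like class of functions near infinity. -/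
structure Kl {d : ℕ} (f : Vec d → ℝ) (r m : ℝ) (k0 : ℕ) : Prop where
  r0 : 0 ≤ r
  smooth : ContDiffOn ℝ ∞ f {x | r < ‖x‖}
  bd : ∀ vs : List (Vec d), k0 ≤ vs.length → ∃ C : ℝ, ∀ x : Vec d, r < ‖x‖ →
    |pd vs f x| ≤ C * ‖x‖ ^ (m - vs.length)

lemma isOpen_ext {d : ℕ} (r : ℝ) : IsOpen {x : Vec d | r < ‖x‖} :=
  isOpen_lt continuous_const continuous_norm

lemma seg_norm {d : ℕ} {r : ℝ} (hr : 0 ≤ r) (τ x : Vec d) (hx : 2 * r + 2 * ‖τ‖ + 1 < ‖x‖)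
    {t : ℝ} (ht : t ∈ Set.Icc (0 : ℝ) 1) :
    r < ‖x + t • τ‖ ∧ ‖x‖ ≤ 2 * ‖x + t • τ‖ ∧ ‖x + t • τ‖ ≤ 2 * ‖x‖ := by
  have h1 : ‖t • τ‖ ≤ ‖τ‖ := by
    rw [norm_smul, Real.norm_of_nonneg ht.1]
    exact mul_le_of_le_one_left (norm_nonneg _) ht.2
  have h2 := norm_add_le x (t • τ)
  have h3 := norm_sub_le_norm_add x (t • τ)
  have := norm_nonneg τ
  refine ⟨?_, ?_, ?_⟩ <;> linarith

lemma Kl.taylor {d : ℕ} {f : Vec d → ℝ} {r m : ℝ} {k0 : ℕ} (h : Kl f r m k0) (τ : Vec d)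
    (P : ℕ) (hP : k0 ≤ P) : ∃ C : ℝ, ∀ x : Vec d, 2 * r + 2 * ‖τ‖ + 1 < ‖x‖ →
      |f (x + τ) - ∑ i ∈ Finset.range P,
          ((i.factorial : ℝ))⁻¹ * pd (List.replicate i τ) f x| ≤ C * ‖x‖ ^ (m - P) := by
  obtain ⟨C, hC⟩ := h.bd (List.replicate P τ) (by simpa using hP)
  refine ⟨|C| * 2 ^ |m - P|, fun x hx => ?_⟩
  have hx0 : 0 < ‖x‖ := by
    have := h.r0; have := norm_nonneg τ; linarith
  have := taylor_bound (isOpen_ext r) τ x (fun t ht => (seg_norm h.r0 τ x hx ht).1)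
    (|C| * 2 ^ |m - P| * ‖x‖ ^ (m - P)) P f h.smooth (by
      intro t ht
      obtain ⟨a1, a2, a3⟩ := seg_norm h.r0 τ x hx ht
      have := hC _ a1
      rw [List.length_replicate] at this
      refine this.trans ?_
      calc C * ‖x + t • τ‖ ^ (m - P) ≤ |C| * ‖x + t • τ‖ ^ (m - P) := by
            gcongr; exact le_abs_self C
        _ ≤ |C| * (2 ^ |m - P| * ‖x‖ ^ (m - P)) := by
            gcongr
            exact rpow_compare hx0 (by norm_num) a2 a3 _
        _ = _ := by ring) 1 (by simp)
  simpa using this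

lemma Kl.mono {d : ℕ} {f : Vec d → ℝ} {r r' m : ℝ} {k0 : ℕ} (h : Kl f r m k0) (hr : r ≤ r') :
    Kl f r' m k0 := by
  refine ⟨h.r0.trans hr, h.smooth.mono fun x hx => lt_of_le_of_lt hr hx, fun vs hvs => ?_⟩
  obtain ⟨C, hC⟩ := h.bd vs hvs
  exact ⟨C, fun x hx => hC x (lt_of_le_of_lt hr hx)⟩

lemma Kl.pd {d : ℕ} {f : Vec d → ℝ} {r m : ℝ} {k0 : ℕ} (h : Kl f r m k0) (vs : List (Vec d)) :
    Kl (pd vs f) r (m - vs.length) (k0 - vs.length) := by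
  refine ⟨h.r0, pd_contDiffOn (isOpen_ext r) vs h.smooth, fun ws hws => ?_⟩
  obtain ⟨C, hC⟩ := h.bd (ws ++ vs) (by simp; omega)
  refine ⟨C, fun x hx => ?_⟩
  have := hC x hx
  rw [pd_append, List.length_append] at this
  convert this using 3
  push_cast
  ring

lemma Kl.D1 {d : ℕ} {f : Vec d → ℝ} {r m : ℝ} {k0 : ℕ} (h : Kl f r m k0) (ρ : Vec d) :
    Kl (D1 ρ f) (2 * r + 2 * ‖ρ‖ + 1) (m - 1) (k0 - 1) ∧
    ∀ vs x, 2 * r + 2 * ‖ρ‖ + 1 < ‖x‖ → Defect.pd vs (Defect.D1 ρ f) x = Defect.D1 ρ (Defect.pd vs f) x := by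
  have hr := h.r0
  have hρ := norm_nonneg ρ
  have m1 : ∀ x ∈ {x : Vec d | 2 * r + 2 * ‖ρ‖ + 1 < ‖x‖}, x ∈ {x : Vec d | r < ‖x‖} := by
    intro x hx
    simp only [Set.mem_ofPred_eq] at *
    linarith
  have m2 : ∀ x ∈ {x : Vec d | 2 * r + 2 * ‖ρ‖ + 1 < ‖x‖}, x + ρ ∈ {x : Vec d | r < ‖x‖} := by
    intro x hx
    have := (seg_norm hr ρ x hx (t := 1) (by simp)).1
    simpa using this
  have hcomm : ∀ vs x, 2 * r + 2 * ‖ρ‖ + 1 < ‖x‖ →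
      Defect.pd vs (Defect.D1 ρ f) x = Defect.D1 ρ (Defect.pd vs f) x :=
    fun vs x hx => pd_D1 (isOpen_ext r) (isOpen_ext _) ρ m1 m2 vs h.smooth x hx
  refine ⟨⟨by positivity, ?_, ?_⟩, hcomm⟩
  · refine ContDiffOn.sub ?_ (h.smooth.mono m1)
    exact h.smooth.comp (contDiff_id.add contDiff_const).contDiffOn m2
  · intro vs hvs
    obtain ⟨C, hC⟩ := (h.pd vs).taylor ρ 1 (by omega)
    refine ⟨C, fun x hx => ?_⟩
    rw [hcomm vs x hx]
    have := hC x hx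
    simp only [Finset.range_one, Finset.sum_singleton, Nat.factorial_zero, Nat.cast_one, inv_one,
      one_mul, List.replicate_zero, pd_nil] at this
    rw [Defect.D1]
    convert this using 3
    ring

lemma Dmulti_succ {d j : ℕ} (ρs : Fin (j + 1) → Vec d) (u : Vec d → ℝ) :
    Dmulti ρs u = D1 (ρs 0) (Dmulti (fun i => ρs i.succ) u) := by
  classical
  funext x
  simp only [Dmulti, D1]
  have hinj : Function.Injective (fun S : Finset (Fin j) => S.image Fin.succ) :=
    Finset.image_injective (Fin.succ_injective j)
  have hu : (Finset.univ : Finset (Finset (Fin (j + 1)))) =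
      (insert (0 : Fin (j + 1)) ((Finset.univ : Finset (Fin j)).image Fin.succ)).powerset := by
    rw [← Finset.powerset_univ, Fin.univ_succ, Finset.cons_eq_insert, Finset.map_eq_image]
    rfl
  have hcard : ∀ S : Finset (Fin j), (S.image Fin.succ).card = S.card := fun S =>
    Finset.card_image_of_injective S (Fin.succ_injective j)
  have h0 : ∀ S : Finset (Fin j), (0 : Fin (j + 1)) ∉ S.image Fin.succ := by
    intro S; simp
  have hs : ∀ S : Finset (Fin j), ∑ i ∈ S.image Fin.succ, ρs i = ∑ i ∈ S, ρs i.succ := by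
    intro S
    rw [Finset.sum_image (fun a _ b _ h => Fin.succ_injective j h)]
  rw [hu, Finset.sum_powerset_insert (h0 _), Finset.powerset_image,
    Finset.sum_image (fun a _ b _ h => hinj h), Finset.sum_image (fun a _ b _ h => hinj h),
    Finset.powerset_univ, add_comm, sub_eq_add_neg, ← Finset.sum_neg_distrib]
  congr 1
  · apply Finset.sum_congr rfl
    intro S _
    rw [Finset.card_insert_of_notMem (h0 S), hcard, Finset.sum_insert (h0 S), hs,
      Nat.add_sub_add_right, add_assoc]
  · apply Finset.sum_congr rfl
    intro S _
    have hle : S.card ≤ j := by simpa using S.card_le_univ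
    rw [hcard, hs, Nat.succ_sub hle, pow_succ]
    simp

lemma Dmulti_zero {d : ℕ} (ρs : Fin 0 → Vec d) (u : Vec d → ℝ) : Dmulti ρs u = u := by
  funext x
  have h0 : (default : Finset (Fin 0)) = ∅ := Subsingleton.elim _ _
  simp [Dmulti, h0]

lemma Kl.Dmulti {d : ℕ} {f : Vec d → ℝ} {r m : ℝ} {k0 : ℕ} (h : Kl f r m k0) (j : ℕ) :
    ∀ ρs : Fin j → Vec d, ∃ r', Kl (Defect.Dmulti ρs f) r' (m - j) (k0 - j) ∧
      ∀ vs x, r' < ‖x‖ →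
        Defect.pd vs (Defect.Dmulti ρs f) x = Defect.Dmulti ρs (Defect.pd vs f) x := by
  induction j with
  | zero =>
    intro ρs
    refine ⟨r, ?_, fun vs x _ => ?_⟩
    · rw [Dmulti_zero]; simpa using h
    · rw [Dmulti_zero, Dmulti_zero]
  | succ j ih =>
    intro ρs
    obtain ⟨r', hK, hc⟩ := ih (fun i => ρs i.succ)
    obtain ⟨h1, h2⟩ := hK.D1 (ρs 0)
    refine ⟨2 * r' + 2 * ‖ρs 0‖ + 1, ?_, fun vs x hx => ?_⟩
    rotate_left
    · rw [Dmulti_succ, Dmulti_succ, h2 vs x hx]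
      have hr := hK.r0
      have hρ := norm_nonneg (ρs 0)
      have m2 := (seg_norm hr (ρs 0) x hx (t := 1) (by simp)).1
      rw [one_smul] at m2
      rw [Defect.D1, Defect.D1, hc vs x (by linarith), hc vs _ m2]
    · rw [Dmulti_succ]
      convert h1 using 1
      · push_cast
        ring
      · omega

lemma Dmulti_congr {d j : ℕ} (ρs : Fin j → Vec d) (u v : Vec d → ℝ) (x : Vec d)
    (h : ∀ S : Finset (Fin j), u (x + ∑ i ∈ S, ρs i) = v (x + ∑ i ∈ S, ρs i)) :
    Dmulti ρs u x = Dmulti ρs v x := by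
  simp only [Dmulti, h]

lemma Dmulti_shift {d j : ℕ} (ρs : Fin j → Vec d) (u : Vec d → ℝ) (x τ : Vec d) :
    Dmulti ρs (fun y => u (y + τ)) x = Dmulti ρs u (x + τ) := by
  simp only [Dmulti]
  refine Finset.sum_congr rfl fun S _ => ?_
  rw [add_right_comm]

lemma Dmulti_sub {d j : ℕ} (ρs : Fin j → Vec d) (u v : Vec d → ℝ) (x : Vec d) :
    Dmulti ρs (fun y => u y - v y) x = Dmulti ρs u x - Dmulti ρs v x := by
  simp only [Dmulti, smul_sub, Finset.sum_sub_distrib]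

lemma Dmulti_add {d j : ℕ} (ρs : Fin j → Vec d) (u v : Vec d → ℝ) (x : Vec d) :
    Dmulti ρs (fun y => u y + v y) x = Dmulti ρs u x + Dmulti ρs v x := by
  simp only [Dmulti, smul_add, Finset.sum_add_distrib]

lemma Dmulti_mul {d j : ℕ} (ρs : Fin j → Vec d) (c : ℝ) (u : Vec d → ℝ) (x : Vec d) :
    Dmulti ρs (fun y => c * u y) x = c * Dmulti ρs u x := by
  simp only [Dmulti, Finset.mul_sum, smul_eq_mul]
  exact Finset.sum_congr rfl fun S _ => by ring

lemma Dmulti_sum {d j : ℕ} {ι : Type*} (t : Finset ι) (ρs : Fin j → Vec d)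
    (u : ι → Vec d → ℝ) (x : Vec d) :
    Dmulti ρs (fun y => ∑ i ∈ t, u i y) x = ∑ i ∈ t, Dmulti ρs (u i) x := by
  simp only [Dmulti, Finset.smul_sum]
  exact Finset.sum_comm

/-- Taylor remainder operator. -/
def trem {d : ℕ} (P : ℕ) (τ : Vec d) (f : Vec d → ℝ) (y : Vec d) : ℝ :=
  f (y + τ) - ∑ i ∈ Finset.range P, ((i.factorial : ℝ))⁻¹ * pd (List.replicate i τ) f y

lemma Kl.trem {d : ℕ} {f : Vec d → ℝ} {r m : ℝ} {k0 : ℕ} (h : Kl f r m k0) {j : ℕ}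
    (ρs : Fin j → Vec d) (τ : Vec d) (P : ℕ) (hP : k0 ≤ P) :
    ∃ C r' : ℝ, ∀ x : Vec d, r' < ‖x‖ →
      |Defect.Dmulti ρs (Defect.trem P τ f) x| ≤ C * ‖x‖ ^ (m - j - P) := by
  obtain ⟨r', hK, hc⟩ := h.Dmulti j ρs
  obtain ⟨C, hC⟩ := hK.taylor τ P (by omega)
  refine ⟨C, 2 * r' + 2 * ‖τ‖ + 1, fun x hx => ?_⟩
  have hr := hK.r0
  have hτ := norm_nonneg τ
  have e : Defect.Dmulti ρs (Defect.trem P τ f) x = Defect.Dmulti ρs f (x + τ) -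
      ∑ i ∈ Finset.range P, ((i.factorial : ℝ))⁻¹ *
        Defect.pd (List.replicate i τ) (Defect.Dmulti ρs f) x := by
    unfold Defect.trem
    rw [Dmulti_sub, Dmulti_shift, Dmulti_sum]
    congr 1
    refine Finset.sum_congr rfl fun i _ => ?_
    rw [Dmulti_mul, hc _ x (by linarith)]
  rw [e]
  exact hC x hx

lemma hom_bound {d : ℕ} {f : Vec d → ℝ} {m : ℝ} (hf : ContinuousOn f {x | x ≠ 0})
    (hom : ∀ t : ℝ, 0 < t → ∀ x : Vec d, x ≠ 0 → f (t • x) = t ^ m * f x) :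
    ∃ C : ℝ, ∀ x : Vec d, x ≠ 0 → |f x| ≤ C * ‖x‖ ^ m := by
  obtain ⟨C, hC⟩ := (isCompact_sphere (0 : Vec d) 1).exists_bound_of_continuousOn
    (hf.mono fun x hx => by
      intro h0
      rw [h0] at hx
      simp at hx)
  refine ⟨C, fun x hx => ?_⟩
  have hn : 0 < ‖x‖ := norm_pos_iff.2 hx
  have hu : ‖x‖⁻¹ • x ∈ Metric.sphere (0 : Vec d) 1 := by
    simp [norm_smul, hn.ne']
  have hx' : x = ‖x‖ • (‖x‖⁻¹ • x) := by
    rw [smul_smul, mul_inv_cancel₀ hn.ne', one_smul]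
  have hne : ‖x‖⁻¹ • x ≠ 0 := smul_ne_zero (by positivity) hx
  have := hC _ hu
  rw [Real.norm_eq_abs] at this
  calc |f x| = |f (‖x‖ • (‖x‖⁻¹ • x))| := by rw [← hx']
    _ = ‖x‖ ^ m * |f (‖x‖⁻¹ • x)| := by
      rw [hom _ hn _ hne, abs_mul, abs_of_nonneg (by positivity)]
    _ ≤ ‖x‖ ^ m * C := by gcongr
    _ = _ := mul_comm _ _

lemma isOpen_ne0 {d : ℕ} : IsOpen {x : Vec d | x ≠ 0} := isOpen_ne

lemma hom_deriv {d : ℕ} {f : Vec d → ℝ} {m : ℝ} (c : ℝ → ℝ)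
    (hf : ContDiffOn ℝ ∞ f {x | x ≠ 0})
    (hom : ∀ t : ℝ, 0 < t → ∀ x : Vec d, x ≠ 0 → f (t • x) = t ^ m * f x + c t) (v : Vec d) :
    ∀ t : ℝ, 0 < t → ∀ x : Vec d, x ≠ 0 → pd [v] f (t • x) = t ^ (m - 1) * pd [v] f x := by
  intro t ht x hx
  have htx : t • x ≠ 0 := smul_ne_zero ht.ne' hx
  have d1 : HasFDerivAt f (fderiv ℝ f (t • x)) (t • x) :=
    (pd_differentiableAt isOpen_ne0 [] hf htx).hasFDerivAt
  have d2 : HasFDerivAt f (fderiv ℝ f x) x :=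
    (pd_differentiableAt isOpen_ne0 [] hf hx).hasFDerivAt
  have e1 : HasFDerivAt (fun y => f (t • y))
      ((fderiv ℝ f (t • x)).comp (t • ContinuousLinearMap.id ℝ (Vec d))) x :=
    HasFDerivAt.comp x d1 ((hasFDerivAt_id x).const_smul t)
  have e2 : HasFDerivAt (fun y => t ^ m * f y + c t) ((t ^ m) • fderiv ℝ f x) x :=
    (d2.const_mul (t ^ m)).add_const (c t)
  have e3 : (fun y => f (t • y)) =ᶠ[𝓝 x] fun y => t ^ m * f y + c t := by
    filter_upwards [isOpen_ne0.mem_nhds hx] with y hy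
    exact hom t ht y hy
  have e4 := (e2.congr_of_eventuallyEq e3).unique e1
  have e5 := congrArg (fun L => L v) e4
  simp only [smul_apply, ContinuousLinearMap.comp_apply,
    ContinuousLinearMap.id_apply, map_smul, smul_eq_mul] at e5
  simp only [pd_cons, pd_nil]
  rw [Real.rpow_sub_one ht.ne', div_mul_eq_mul_div, e5]
  field_simp

lemma Kl_of_hom {d : ℕ} {f : Vec d → ℝ} {m : ℝ} (hf : ContDiffOn ℝ ∞ f {x | x ≠ 0})
    (hom : ∀ t : ℝ, 0 < t → ∀ x : Vec d, x ≠ 0 → f (t • x) = t ^ m * f x) :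
    Kl f 0 m 0 := by
  have hset : {x : Vec d | (0 : ℝ) < ‖x‖} = {x | x ≠ 0} := by
    ext x; simp
  refine ⟨le_rfl, by rw [hset]; exact hf, fun vs _ => ?_⟩
  have key : ∀ t : ℝ, 0 < t → ∀ x : Vec d, x ≠ 0 →
      pd vs f (t • x) = t ^ (m - vs.length) * pd vs f x := by
    induction vs with
    | nil => simpa [pd_nil] using hom
    | cons v vs ih =>
      have := hom_deriv (m := m - vs.length) (fun _ => 0) (pd_contDiffOn isOpen_ne0 vs hf)
        (by simpa using ih (by simp)) v
      intro t ht x hx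
      have h := this t ht x hx
      rw [← pd_append] at h
      have hl : m - ((v :: vs).length : ℝ) = m - vs.length - 1 := by
        rw [List.length_cons]
        push_cast
        ring
      rw [hl]
      exact h
  obtain ⟨C, hC⟩ := hom_bound (pd_contDiffOn isOpen_ne0 vs hf).continuousOn key
  exact ⟨C, fun x hx => hC x (norm_pos_iff.1 hx)⟩

lemma Kl_of_log {d : ℕ} {f : Vec d → ℝ} (c : ℝ → ℝ) (hf : ContDiffOn ℝ ∞ f {x | x ≠ 0})
    (hom : ∀ t : ℝ, 0 < t → ∀ x : Vec d, x ≠ 0 → f (t • x) = f x + c t) :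
    Kl f 0 0 1 := by
  have hset : {x : Vec d | (0 : ℝ) < ‖x‖} = {x | x ≠ 0} := by
    ext x; simp
  refine ⟨le_rfl, by rw [hset]; exact hf, fun vs hvs => ?_⟩
  rcases List.eq_nil_or_concat vs with h | ⟨ws, v, h⟩
  · rw [h] at hvs; simp at hvs
  · subst h
    have h1 := hom_deriv (m := 0) c hf (by simpa using hom) v
    obtain ⟨C, hC⟩ := (Kl_of_hom (pd_contDiffOn isOpen_ne0 [v] hf) h1).bd ws (by simp)
    refine ⟨C, fun x hx => ?_⟩
    rw [List.concat_eq_append, pd_append]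
    convert hC x hx using 3
    simp
    ring

lemma iteratedFDeriv_pd {d : ℕ} {f : Vec d → ℝ} (hf : ContDiffOn ℝ ∞ f {x | x ≠ 0})
    (τ : Vec d) (i : ℕ) : ∀ x : Vec d, x ≠ 0 →
      iteratedFDeriv ℝ i f x (fun _ => τ) = pd (List.replicate i τ) f x := by
  induction i with
  | zero => intro x _; simp [pd_nil]
  | succ i ih =>
    intro x hx
    rw [iteratedFDeriv_succ_apply_left, List.replicate_succ, pd_cons]
    have he : pd (List.replicate i τ) f =ᶠ[𝓝 x]
        fun y => iteratedFDeriv ℝ i f y (fun _ => τ) := by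
      filter_upwards [isOpen_ne0.mem_nhds hx] with y hy
      exact (ih y hy).symm
    have hd : DifferentiableAt ℝ (iteratedFDeriv ℝ i f) x :=
      (hf.contDiffAt (isOpen_ne0.mem_nhds hx)).differentiableAt_iteratedFDeriv
        (by exact_mod_cast ENat.natCast_lt_top i)
    have h2 := ((ContinuousMultilinearMap.apply ℝ (fun _ : Fin i => Vec d) ℝ
      (fun _ => τ)).hasFDerivAt.comp x hd.hasFDerivAt).fderiv
    simp only
    rw [he.fderiv_eq]
    have h3 := congrArg (fun L => L τ) h2
    exact h3.symm

lemma aContract_pow {d : ℕ} {f : Vec d → ℝ} (hf : ContDiffOn ℝ ∞ f {x | x ≠ 0})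
    (τ : Vec d) (i : ℕ) (x : Vec d) (hx : x ≠ 0) :
    ∑ js : Fin i → Fin d, (∏ m, τ (js m)) * pderivMulti i js f x =
      pd (List.replicate i τ) f x := by
  rw [← iteratedFDeriv_pd hf τ i x hx]
  have hτ : τ = ∑ q : Fin d, τ q • (Pi.single q (1 : ℝ) : Vec d) := by
    funext k
    simp [Finset.sum_apply, Pi.single_apply]
  conv_rhs => rw [hτ]
  rw [ContinuousMultilinearMap.map_sum]
  refine Finset.sum_congr rfl fun js _ => ?_
  rw [ContinuousMultilinearMap.map_smul_univ]
  rfl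
lemma norm_le_enorm {d : ℕ} (x : Vec d) : ‖x‖ ≤ enorm x := by
  have h0 : 0 ≤ enorm x := Real.sqrt_nonneg _
  rw [pi_norm_le_iff_of_nonneg h0]
  intro i
  rw [Real.norm_eq_abs]
  apply Real.abs_le_sqrt
  exact Finset.single_le_sum (f := fun i => x i ^ 2) (fun i _ => sq_nonneg _) (Finset.mem_univ i)

lemma abs_apply_le_enorm {d : ℕ} (x : Vec d) (i : Fin d) : |x i| ≤ enorm x := by
  have := norm_le_pi_norm x i
  rw [Real.norm_eq_abs] at this
  exact this.trans (norm_le_enorm x)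

lemma enorm_le_sum {d : ℕ} (x : Vec d) : enorm x ≤ ∑ i, |x i| := by
  have h : ∑ i, x i ^ 2 ≤ (∑ i, |x i|) ^ 2 := by
    have := Finset.sum_sq_le_sq_sum_of_nonneg (s := Finset.univ) (f := fun i => |x i|)
      (fun i _ => abs_nonneg _)
    simpa using this
  exact Real.sqrt_le_iff.2 ⟨Finset.sum_nonneg fun i _ => abs_nonneg _, h⟩

lemma enorm_le_norm {d : ℕ} (x : Vec d) : enorm x ≤ d * ‖x‖ := by
  refine (enorm_le_sum x).trans ?_
  calc ∑ i, |x i| ≤ ∑ _i : Fin d, ‖x‖ := Finset.sum_le_sum fun i _ => norm_le_pi_norm x i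
    _ = d * ‖x‖ := by simp

lemma ang_ge_two {d : ℕ} (x : Vec d) : 2 ≤ ang x := by
  have := Real.sqrt_nonneg (∑ i, (x i) ^ 2)
  unfold ang enorm; linarith

lemma norm_le_ang {d : ℕ} (x : Vec d) : ‖x‖ ≤ ang x := by
  have := norm_le_enorm x
  unfold ang; linarith

lemma ang_le_norm {d : ℕ} (x : Vec d) (hx : 2 ≤ ‖x‖) : ang x ≤ (d + 1) * ‖x‖ := by
  have := enorm_le_norm x
  unfold ang; linarith

lemma latticePt_eq {d : ℕ} (A : Matrix (Fin d) (Fin d) ℝ) (z : Fin d → ℤ) :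
    latticePt d A z = A.mulVec (fun j => (z j : ℝ)) := rfl

lemma latticePt_add {d : ℕ} (A : Matrix (Fin d) (Fin d) ℝ) (z w : Fin d → ℤ) :
    latticePt d A (z + w) = latticePt d A z + latticePt d A w := by
  rw [latticePt_eq, latticePt_eq, latticePt_eq, ← Matrix.mulVec_add]
  congr 1
  funext j
  simp

lemma latticePt_tendsto {d : ℕ} (A : Matrix (Fin d) (Fin d) ℝ) (hA : IsUnit A.det) (r : ℝ) :
    ∀ᶠ z in cofinite, r < ‖latticePt d A z‖ := by
  rw [eventually_cofinite]
  set B : ℝ := ∑ i, ∑ j, |A⁻¹ i j| * |r| with hB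
  have key : ∀ z : Fin d → ℤ, ¬ r < ‖latticePt d A z‖ → ∀ i, |(z i : ℝ)| ≤ B := by
    intro z hz i
    have h1 : (fun j => (z j : ℝ)) = A⁻¹.mulVec (latticePt d A z) := by
      rw [latticePt_eq, Matrix.mulVec_mulVec, Matrix.nonsing_inv_mul A hA, Matrix.one_mulVec]
    have h2 : (z i : ℝ) = ∑ j, A⁻¹ i j * latticePt d A z j := congrFun h1 i
    rw [h2]
    calc |∑ j, A⁻¹ i j * latticePt d A z j| ≤ ∑ j, |A⁻¹ i j * latticePt d A z j| :=
          Finset.abs_sum_le_sum_abs _ _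
      _ ≤ ∑ j, |A⁻¹ i j| * |r| := by
          refine Finset.sum_le_sum fun j _ => ?_
          rw [abs_mul]
          refine mul_le_mul_of_nonneg_left ?_ (abs_nonneg _)
          have := norm_le_pi_norm (latticePt d A z) j
          rw [Real.norm_eq_abs] at this
          push Not at hz
          exact this.trans (hz.trans (le_abs_self r))
      _ ≤ B := Finset.single_le_sum (f := fun i => ∑ j, |A⁻¹ i j| * |r|)
          (fun i _ => Finset.sum_nonneg fun j _ => by positivity) (Finset.mem_univ i)
  refine (Set.finite_Icc (fun _ : Fin d => -⌈B⌉) (fun _ : Fin d => ⌈B⌉)).subset ?_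
  intro z hz
  have hk := key z hz
  constructor
  · intro i
    have h1 := (abs_le.1 (hk i)).1
    have h2 := Int.le_ceil B
    have : ((-⌈B⌉ : ℤ) : ℝ) ≤ z i := by push_cast; linarith
    exact_mod_cast this
  · intro i
    have h1 := (abs_le.1 (hk i)).2
    have h2 := Int.le_ceil B
    have : (z i : ℝ) ≤ ((⌈B⌉ : ℤ) : ℝ) := by linarith
    exact_mod_cast this

lemma ang_rpow_mono {d : ℕ} {e e' : ℝ} (h : e ≤ e') (x : Vec d) : ang x ^ e ≤ ang x ^ e' :=
  Real.rpow_le_rpow_of_exponent_le (by have := ang_ge_two x; linarith) h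

lemma toBigO {d : ℕ} (A : Matrix (Fin d) (Fin d) ℝ) (hA : IsUnit A.det) (F : Vec d → ℝ)
    {e e' : ℝ} (hF : ∃ C r : ℝ, ∀ x : Vec d, r < ‖x‖ → |F x| ≤ C * ‖x‖ ^ e) (he : e ≤ e') :
    (fun z => F (latticePt d A z)) =O[cofinite] fun z => ang (latticePt d A z) ^ e' := by
  obtain ⟨C, r, hC⟩ := hF
  refine Asymptotics.IsBigO.of_bound (|C| * ((d : ℝ) + 1) ^ |e|) ?_
  filter_upwards [latticePt_tendsto A hA r, latticePt_tendsto A hA 2] with z h1 h2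
  set x := latticePt d A z
  have ha : 0 < ang x := by have := ang_ge_two x; linarith
  rw [Real.norm_eq_abs, Real.norm_of_nonneg (by positivity)]
  have hd0 : (0 : ℝ) ≤ d := Nat.cast_nonneg d
  have hcmp : ‖x‖ ^ e ≤ ((d : ℝ) + 1) ^ |e| * ang x ^ e :=
    rpow_compare ha (by linarith) (ang_le_norm x h2.le) (by
      have := norm_le_ang x
      nlinarith) e
  calc |F x| ≤ C * ‖x‖ ^ e := hC x h1
    _ ≤ |C| * ‖x‖ ^ e := by gcongr; exact le_abs_self C
    _ ≤ |C| * (((d : ℝ) + 1) ^ |e| * ang x ^ e) := by gcongr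
    _ ≤ |C| * (((d : ℝ) + 1) ^ |e| * ang x ^ e') := by
        have := ang_rpow_mono he x
        refine mul_le_mul_of_nonneg_left ?_ (abs_nonneg _)
        exact mul_le_mul_of_nonneg_left this (by positivity)
    _ = _ := by ring

lemma shiftBigO {d : ℕ} (A : Matrix (Fin d) (Fin d) ℝ) (hA : IsUnit A.det) (F : Vec d → ℝ)
    {e : ℝ} (hF : (fun z => F (latticePt d A z)) =O[cofinite] fun z => ang (latticePt d A z) ^ e)
    {τ : Vec d} (hτ : τ ∈ Lattice d A) :
    (fun z => F (latticePt d A z + τ)) =O[cofinite] fun z => ang (latticePt d A z) ^ e := by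
  obtain ⟨w, rfl⟩ := hτ
  have ht : Tendsto (fun z : Fin d → ℤ => z + w) cofinite cofinite :=
    (add_left_injective w).tendsto_cofinite
  have h1 := hF.comp_tendsto ht
  simp only [Function.comp_def, latticePt_add] at h1
  refine h1.trans ?_
  refine toBigO A hA (fun x => ang (x + latticePt d A w) ^ e) (e := e) ?_ le_rfl
  set τ := latticePt d A w
  refine ⟨(2 * ((d : ℝ) + 1)) ^ |e|, 2 * 2 + 2 * ‖τ‖ + 1, fun x hx => ?_⟩
  obtain ⟨a1, a2, a3⟩ := seg_norm (by norm_num) τ x hx (t := 1) (by simp)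
  rw [one_smul] at a1 a2 a3
  have hτ0 := norm_nonneg τ
  have hd0 : (0 : ℝ) ≤ d := Nat.cast_nonneg d
  have b1 := norm_le_ang (x + τ)
  have b2 := ang_le_norm (x + τ) a1.le
  have b3 := ang_ge_two (x + τ)
  rw [abs_of_nonneg (by positivity)]
  apply rpow_compare (by linarith) (by linarith)
  · nlinarith
  · nlinarith

lemma zero_mem_Lattice {d : ℕ} (A : Matrix (Fin d) (Fin d) ℝ) : (0 : Vec d) ∈ Lattice d A :=
  ⟨0, by funext i; simp [latticePt]⟩

lemma sum_mem_Lattice {d : ℕ} (A : Matrix (Fin d) (Fin d) ℝ) {ι : Type*} (S : Finset ι)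
    (f : ι → Vec d) (hf : ∀ i, f i ∈ Lattice d A) : ∑ i ∈ S, f i ∈ Lattice d A := by
  classical
  induction S using Finset.induction_on with
  | empty => simpa using zero_mem_Lattice A
  | insert a S ha ih =>
    rw [Finset.sum_insert ha]
    obtain ⟨z, hz⟩ := hf a
    obtain ⟨w, hw⟩ := ih
    exact ⟨z + w, by rw [latticePt_add, hz, hw]⟩

/-- Index type of the shifts occurring in a multipole expansion. -/
abbrev ShIdx (d p : ℕ) : Type := Σ i : Fin p, (Fin i → Fin d) × Finset (Fin i)

lemma kernel_Kl {d N : ℕ} (hd : 2 ≤ d) {A : Matrix (Fin d) (Fin d) ℝ} {R : Finset (Vec d)}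
    {G : Vec d → Fin N → Fin N → ℝ} {Gn : ℕ → Vec d → Fin N → Fin N → ℝ}
    (hGn : KernelFamily d N A R G Gn) (n : ℕ) (i0 k : Fin N) :
    ContDiffOn ℝ ∞ (fun x => Gn n x i0 k) {x | x ≠ 0} ∧
    Kl (fun x => Gn n x i0 k) 0 ((2 : ℝ) - 2 * n - d) (if n = 0 then 1 else 0) := by
  obtain ⟨hs, hh, hl, -⟩ := hGn
  have hsm : ContDiffOn ℝ ∞ (fun x => Gn n x i0 k) {x | x ≠ 0} :=
    contDiffOn_pi.1 (contDiffOn_pi.1 (hs n) i0) k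
  refine ⟨hsm, ?_⟩
  by_cases hn : 1 ≤ n ∨ 3 ≤ d
  · have hK := Kl_of_hom hsm (fun t ht x hx => hh n hn t ht x hx i0 k)
    exact ⟨hK.r0, hK.smooth, fun vs _ => hK.bd vs (by omega)⟩
  · push Not at hn
    have hn0 : n = 0 := by omega
    have hd2 : d = 2 := by omega
    obtain ⟨M, φ, -, hφ, hG0⟩ := hl hd2
    have hK := Kl_of_log (fun t => M i0 k * Real.log t) hsm (by
      intro t ht x hx
      have htx : t • x ≠ 0 := smul_ne_zero ht.ne' hx
      have hex : enorm x ≠ 0 := by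
        have := norm_le_enorm x
        have := norm_pos_iff.2 hx
        linarith
      have hen : enorm (t • x) = t * enorm x := by
        unfold enorm
        simp only [Pi.smul_apply, smul_eq_mul, mul_pow, ← Finset.mul_sum]
        rw [Real.sqrt_mul (by positivity), Real.sqrt_sq ht.le]
      subst hn0
      rw [hG0 _ htx, hG0 _ hx, hφ t ht x hx, hen, Real.log_mul ht.ne' hex]
      simp
      ring)
    have hdeg : (2 : ℝ) - 2 * n - d = 0 := by
      rw [hn0, hd2]; norm_num
    rw [if_pos hn0, hdeg]
    exact hK

lemma DnormJ_of_bigO {d N : ℕ} (A : Matrix (Fin d) (Fin d) ℝ) (R : Finset (Vec d)) (j : ℕ)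
    (w : Vec d → Vec N) (e : ℝ)
    (h : ∀ (ρs : Fin j → {x // x ∈ R}) (i0 : Fin N),
      (fun z => Dmulti (fun i => (ρs i : Vec d)) (fun x => w x i0) (latticePt d A z))
        =O[cofinite] fun z => ang (latticePt d A z) ^ e) :
    ∃ C : ℝ, ∀ z : Fin d → ℤ, DnormJ R j w (latticePt d A z) ≤ C * ang (latticePt d A z) ^ e := by
  have hb : ∀ (ρs : Fin j → {x // x ∈ R}) (i0 : Fin N), ∃ C : ℝ, ∀ z : Fin d → ℤ,
      |Dmulti (fun i => (ρs i : Vec d)) (fun x => w x i0) (latticePt d A z)| ≤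
        C * ang (latticePt d A z) ^ e := by
    intro ρs i0
    obtain ⟨C, -, hC⟩ := Asymptotics.bound_of_isBigO_cofinite (h ρs i0)
    refine ⟨C, fun z => ?_⟩
    have ha : 0 < ang (latticePt d A z) := by
      have := ang_ge_two (latticePt d A z); linarith
    have hp : 0 < ang (latticePt d A z) ^ e := Real.rpow_pos_of_pos ha e
    have := hC (x := z) hp.ne'
    rwa [Real.norm_eq_abs, Real.norm_of_nonneg hp.le] at this
  choose Cf hCf using hb
  refine ⟨∑ ρs : Fin j → {x // x ∈ R}, ∑ i0, Cf ρs i0, fun z => ?_⟩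
  have h1 : ∀ ρs : Fin j → {x // x ∈ R},
      enorm (Dmulti (fun i => (ρs i : Vec d)) w (latticePt d A z)) ≤
        (∑ i0, Cf ρs i0) * ang (latticePt d A z) ^ e := by
    intro ρs
    refine (enorm_le_sum _).trans ?_
    rw [Finset.sum_mul]
    refine Finset.sum_le_sum fun i0 _ => ?_
    refine le_of_eq_of_le ?_ (hCf ρs i0 z)
    simp [Dmulti, Finset.sum_apply]
  have h2 : DnormJ R j w (latticePt d A z) ≤ ∑ ρs : Fin j → {x // x ∈ R},
      enorm (Dmulti (fun i => (ρs i : Vec d)) w (latticePt d A z)) := by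
    unfold DnormJ
    have hnn : ∀ ρs : Fin j → {x // x ∈ R},
      0 ≤ enorm (Dmulti (fun i => (ρs i : Vec d)) w (latticePt d A z)) :=
      fun ρs => Real.sqrt_nonneg _
    refine Real.sqrt_le_iff.2 ⟨Finset.sum_nonneg fun ρs _ => hnn ρs, ?_⟩
    exact Finset.sum_sq_le_sq_sum_of_nonneg fun ρs _ => hnn ρs
  refine h2.trans ?_
  rw [Finset.sum_mul]
  exact Finset.sum_le_sum fun ρs _ => h1 ρs

lemma stencil_avoid {d : ℕ} (A : Matrix (Fin d) (Fin d) ℝ) (hA : IsUnit A.det) {j : ℕ}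
    (ρs : Fin j → Vec d) : ∀ᶠ z in cofinite, ∀ S : Finset (Fin j),
      latticePt d A z + ∑ i ∈ S, ρs i ≠ 0 := by
  rw [eventually_all]
  intro S
  filter_upwards [latticePt_tendsto A hA ‖∑ i ∈ S, ρs i‖] with z hz h0
  have : latticePt d A z = -∑ i ∈ S, ρs i := eq_neg_of_add_eq_zero_left h0
  rw [this, norm_neg] at hz
  exact lt_irrefl _ hz

lemma rem_bigO {d N : ℕ} {A : Matrix (Fin d) (Fin d) ℝ} (hA : IsUnit A.det) {R : Finset (Vec d)}
    {G : Vec d → Fin N → Fin N → ℝ} {Gn : ℕ → Vec d → Fin N → Fin N → ℝ}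
    (hGn : KernelFamily d N A R G Gn) (p j : ℕ) (ρs : Fin j → {x // x ∈ R}) (i0 k : Fin N) :
    (fun z => Dmulti (fun i => (ρs i : Vec d))
      (fun x => G x i0 k - ∑ n ∈ Finset.range (p + 1), Gn n x i0 k) (latticePt d A z))
        =O[cofinite] fun z => ang (latticePt d A z) ^ ((2 : ℝ) - d - j - p) := by
  obtain ⟨C, hC⟩ := hGn.2.2.2 j p
  refine Asymptotics.IsBigO.of_bound |C| ?_
  filter_upwards [stencil_avoid A hA (fun i => (ρs i : Vec d))] with z hz
  have h := hC ρs z hz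
  have ha : 0 < ang (latticePt d A z) := by
    have := ang_ge_two (latticePt d A z); linarith
  rw [Real.norm_eq_abs, Real.norm_of_nonneg (by positivity)]
  set Mx := Dmulti (fun m => (ρs m : Vec d))
          (fun x i k => G x i k - ∑ n ∈ Finset.range (p + 1), Gn n x i k)
          (latticePt d A z) with hMx
  have e1 : Dmulti (fun i => (ρs i : Vec d))
      (fun x => G x i0 k - ∑ n ∈ Finset.range (p + 1), Gn n x i0 k) (latticePt d A z) =
      Mx i0 k := by
    simp [hMx, Dmulti, Finset.sum_apply]
  have e2 : |Mx i0 k| ≤ mnorm Mx := by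
    unfold mnorm
    apply Real.abs_le_sqrt
    calc Mx i0 k ^ 2 ≤ ∑ j, Mx i0 j ^ 2 :=
          Finset.single_le_sum (f := fun j => Mx i0 j ^ 2) (fun i _ => sq_nonneg _)
            (Finset.mem_univ k)
      _ ≤ _ := Finset.single_le_sum (f := fun i => ∑ j, Mx i j ^ 2)
          (fun i _ => Finset.sum_nonneg fun _ _ => sq_nonneg _) (Finset.mem_univ i0)
  rw [e1]
  calc |Mx i0 k| ≤ C * ang (latticePt d A z) ^ (-(2 : ℝ) * p - d - j) := e2.trans h
    _ ≤ |C| * ang (latticePt d A z) ^ (-(2 : ℝ) * p - d - j) := by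
        gcongr; exact le_abs_self C
    _ ≤ _ := by
        refine mul_le_mul_of_nonneg_left ?_ (abs_nonneg _)
        apply ang_rpow_mono
        have : (0 : ℝ) ≤ p := Nat.cast_nonneg p
        linarith

/-- Lemma: continuum rewriting of the discrete multipole
expansion. -/
theorem multipole_continuum_rewriting
    (d N : ℕ) (hd : 2 ≤ d)
    (A : Matrix (Fin d) (Fin d) ℝ) (hA : IsUnit A.det)
    (R : Finset (Vec d)) (hR0 : (0 : Vec d) ∉ R)
    (hRlat : ∀ ρ ∈ R, ρ ∈ Lattice d A)
    (hRsym : ∀ ρ ∈ R, -ρ ∈ R)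
    (hRspan : ∀ x ∈ Lattice d A, ∃ c : Vec d → ℤ, x = ∑ ρ ∈ R, (c ρ : ℝ) • ρ)
    (C : Vec d → Vec d → Fin N → Fin N → ℝ)
    (hCsym : ∀ σ ρ i j, C σ ρ i j = C ρ σ j i)
    (hCpt : ∀ σ ρ, C σ ρ = C (-σ) (-ρ))
    (hstab : IsStable d N A R C)
    (G : Vec d → Fin N → Fin N → ℝ) (hG : IsLatticeGreen d N A R C G)
    (Gn : ℕ → Vec d → Fin N → Fin N → ℝ) (hGn : KernelFamily d N A R G Gn)
    (s : Fin d → Vec d) (hslat : ∀ i, s i ∈ Lattice d A)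
    (hsind : LinearIndependent ℝ s)
    (hsspan : ∀ x ∈ Lattice d A, ∃ z : Fin d → ℤ, x = ∑ i, (z i : ℝ) • s i)
    (p : ℕ) (hp : 1 ≤ p)
    (b : (i : ℕ) → Fin N → (Fin i → Fin d) → ℝ)
    (hb : ∀ (i : ℕ) (k : Fin N), SymArr (b i k)) :
    ∃ a : (i : ℕ) → ℕ → Fin N → (Fin i → Fin d) → ℝ,
      (∀ (i n : ℕ) (k : Fin N), SymArr (a i n k)) ∧
      (∀ j : ℕ, ∃ Cj : ℝ, ∀ z : Fin d → ℤ,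
        DnormJ R j
          (fun ℓ i0 =>
            (∑ i ∈ Finset.range p, ∑ k : Fin N,
              multipole d N s i (b i k) (col G k) ℓ i0) -
            (if ℓ = 0 then 0 else
              ∑ k : Fin N, ∑ n ∈ Finset.range ((p + 1) / 2),
                ∑ i ∈ Finset.range (p - 2 * n),
                  aContract i (a i n k) (fun x => Gn n x i0 k) ℓ))
          (latticePt d A z) ≤
          Cj * ang (latticePt d A z) ^ ((2 : ℝ) - d - j - p)) := by
  let τ : ShIdx d p → Vec d := fun t => ∑ m ∈ t.2.2, s (t.2.1 m)
  let c : ShIdx d p → Fin N → ℝ :=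
    fun t k => b t.1 k t.2.1 * (-1 : ℝ) ^ ((t.1 : ℕ) - t.2.2.card)
  have hτ : ∀ t, τ t ∈ Lattice d A := fun t => sum_mem_Lattice A _ _ fun m => hslat _
  have hmul : ∀ (ℓ : Vec d) (i0 : Fin N), (∑ i ∈ Finset.range p, ∑ k : Fin N,
      multipole d N s i (b i k) (col G k) ℓ i0) =
      ∑ k : Fin N, ∑ t, c t k * G (ℓ + τ t) i0 k := by
    intro ℓ i0
    rw [Finset.sum_comm]
    refine Finset.sum_congr rfl fun k _ => ?_
    rw [Finset.sum_range (fun i => multipole d N s i (b i k) (col G k) ℓ i0), Fintype.sum_sigma]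
    refine Finset.sum_congr rfl fun i _ => ?_
    rw [Fintype.sum_prod_type]
    simp only [multipole, Dmulti, Finset.sum_apply, Pi.smul_apply, smul_eq_mul, col,
      Finset.mul_sum, c, τ, mul_assoc]
  refine ⟨fun i _ k js => ∑ t, c t k * (((i.factorial : ℝ))⁻¹ * ∏ m, τ t (js m)), ?_, ?_⟩
  · intro i n k π σv
    refine Finset.sum_congr rfl fun t _ => ?_
    congr 2
    exact Equiv.prod_comp π (fun m => τ t (σv m))
  intro j
  apply DnormJ_of_bigO
  intro ρs i0
  have hac : ∀ (i n : ℕ) (k : Fin N) (y : Vec d), y ≠ 0 →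
      aContract i (fun js => ∑ t, c t k * (((i.factorial : ℝ))⁻¹ * ∏ m, τ t (js m)))
        (fun x => Gn n x i0 k) y =
      ∑ t, c t k * (((i.factorial : ℝ))⁻¹ *
        pd (List.replicate i (τ t)) (fun x => Gn n x i0 k) y) := by
    intro i n k y hy
    unfold aContract
    simp only [Finset.sum_mul]
    rw [Finset.sum_comm]
    refine Finset.sum_congr rfl fun t _ => ?_
    rw [← aContract_pow (kernel_Kl hd hGn n i0 k).1 (τ t) i y hy, Finset.mul_sum, Finset.mul_sum]
    refine Finset.sum_congr rfl fun js _ => ?_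
    ring
  have hpt : ∀ y : Vec d, y ≠ 0 →
      (∑ i ∈ Finset.range p, ∑ k : Fin N, multipole d N s i (b i k) (col G k) y i0) -
            (if y = 0 then 0 else
              ∑ k : Fin N, ∑ n ∈ Finset.range ((p + 1) / 2),
                ∑ i ∈ Finset.range (p - 2 * n),
                  aContract i (fun js => ∑ t, c t k * (((i.factorial : ℝ))⁻¹ * ∏ m, τ t (js m)))
                    (fun x => Gn n x i0 k) y) =
      ∑ k : Fin N, ∑ t, c t k * ((fun x => G x i0 k - ∑ n ∈ Finset.range (p + 1), Gn n x i0 k)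
          (y + τ t) + ∑ n ∈ Finset.range (p + 1),
            trem (p - 2 * n) (τ t) (fun x => Gn n x i0 k) y) := by
    intro y hy
    rw [hmul, if_neg hy, ← Finset.sum_sub_distrib]
    refine Finset.sum_congr rfl fun k _ => ?_
    have e1 : ∑ n ∈ Finset.range ((p + 1) / 2), ∑ i ∈ Finset.range (p - 2 * n),
        aContract i (fun js => ∑ t, c t k * (((i.factorial : ℝ))⁻¹ * ∏ m, τ t (js m)))
                    (fun x => Gn n x i0 k) y =
        ∑ n ∈ Finset.range (p + 1), ∑ i ∈ Finset.range (p - 2 * n),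
        aContract i (fun js => ∑ t, c t k * (((i.factorial : ℝ))⁻¹ * ∏ m, τ t (js m)))
                    (fun x => Gn n x i0 k) y := by
      apply Finset.sum_subset
      · intro n hn
        simp only [Finset.mem_range] at *
        omega
      · intro n _ hn
        simp only [Finset.mem_range] at hn
        have : p - 2 * n = 0 := by omega
        rw [this]
        simp
    have e2 : ∑ n ∈ Finset.range (p + 1), ∑ i ∈ Finset.range (p - 2 * n),
        aContract i (fun js => ∑ t, c t k * (((i.factorial : ℝ))⁻¹ * ∏ m, τ t (js m)))
                    (fun x => Gn n x i0 k) y =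
        ∑ t, c t k * ∑ n ∈ Finset.range (p + 1), ∑ i ∈ Finset.range (p - 2 * n),
          ((i.factorial : ℝ))⁻¹ * pd (List.replicate i (τ t)) (fun x => Gn n x i0 k) y := by
      simp only [hac _ _ _ y hy, Finset.mul_sum]
      rw [Finset.sum_comm (s := Finset.univ)]
      refine Finset.sum_congr rfl fun n _ => ?_
      rw [Finset.sum_comm]
    rw [e1, e2, ← Finset.sum_sub_distrib]
    refine Finset.sum_congr rfl fun t _ => ?_
    simp only [trem, Finset.sum_sub_distrib]
    ring
  have hev : (fun z => Dmulti (fun i => (ρs i : Vec d)) (fun ℓ =>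
      (∑ i ∈ Finset.range p, ∑ k : Fin N, multipole d N s i (b i k) (col G k) ℓ i0) -
            (if ℓ = 0 then 0 else
              ∑ k : Fin N, ∑ n ∈ Finset.range ((p + 1) / 2),
                ∑ i ∈ Finset.range (p - 2 * n),
                  aContract i (fun js => ∑ t, c t k * (((i.factorial : ℝ))⁻¹ * ∏ m, τ t (js m)))
                    (fun x => Gn n x i0 k) ℓ)) (latticePt d A z)) =ᶠ[cofinite]
      fun z => ∑ k : Fin N, ∑ t, c t k * (Dmulti (fun i => (ρs i : Vec d))
          (fun x => G x i0 k - ∑ n ∈ Finset.range (p + 1), Gn n x i0 k) (latticePt d A z + τ t)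
          + ∑ n ∈ Finset.range (p + 1), Dmulti (fun i => (ρs i : Vec d))
            (trem (p - 2 * n) (τ t) (fun x => Gn n x i0 k)) (latticePt d A z)) := by
    filter_upwards [stencil_avoid A hA (fun i => (ρs i : Vec d))] with z hz
    refine (Dmulti_congr _ _
      (fun y => ∑ k : Fin N, ∑ t, c t k *
        ((fun x => G x i0 k - ∑ n ∈ Finset.range (p + 1), Gn n x i0 k)
          (y + τ t) + ∑ n ∈ Finset.range (p + 1),
            trem (p - 2 * n) (τ t) (fun x => Gn n x i0 k) y)) _ (fun S => hpt _ (hz S))).trans ?_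
    rw [Dmulti_sum Finset.univ _ (fun k y => ∑ t, c t k *
        ((fun x => G x i0 k - ∑ n ∈ Finset.range (p + 1), Gn n x i0 k)
          (y + τ t) + ∑ n ∈ Finset.range (p + 1),
            trem (p - 2 * n) (τ t) (fun x => Gn n x i0 k) y))]
    refine Finset.sum_congr rfl fun k _ => ?_
    rw [Dmulti_sum]
    refine Finset.sum_congr rfl fun t _ => ?_
    rw [Dmulti_mul, Dmulti_add, ← Dmulti_shift, Dmulti_sum]
  refine hev.trans_isBigO ?_
  refine Asymptotics.IsBigO.fun_sum fun k _ => Asymptotics.IsBigO.fun_sum fun t _ =>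
    Asymptotics.IsBigO.const_mul_left ?_ _
  refine Asymptotics.IsBigO.add ?_ (Asymptotics.IsBigO.fun_sum fun n _ => ?_)
  · exact shiftBigO A hA _ (rem_bigO hA hGn p j ρs i0 k) (hτ t)
  · have hK := (kernel_Kl hd hGn n i0 k).2
    refine toBigO A hA _ (hK.trem (fun i => (ρs i : Vec d)) (τ t) (p - 2 * n) ?_) ?_
    · split_ifs with h
      · omega
      · omega
    · have h1 : (p : ℝ) ≤ ((p - 2 * n : ℕ) : ℝ) + 2 * n := by
        have : p ≤ (p - 2 * n) + 2 * n := by omega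
        exact_mod_cast this
      linarith

end Defect
end
end

section
/- (Renormalized oscillatory integral identity for the kernels J.) For every integer h ≥ 1, every δ > 0, and every real w ≠ 0, the following identity holds in ℂ: (1/h!)·(iw)^h·(−Log(−iw) + ∑_{j=1}^{h} 1/j) = ∫_δ^∞ r^{−h−1} e^{iwr} dr + (i^h/h!)·w^h·(γ + log δ) − ∑_{k=0}^{h−1} (i^k/k!)·w^k·δ^{k−h}/(h−k) + δ·(iw)^{h+1}·∑_{k=0}^{∞} (δ i w)^k / ((k+1)·(k+h+1)!), where the integral converges absolutely and the power series converges absolutely. -/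
noncomputable section

open scoped BigOperators
open MeasureTheory Complex

open Filter Topology in
lemma logexp_integrable : IntegrableOn (fun t : ℝ => (Real.log t : ℂ) * (Real.exp (-t) : ℂ)) (Set.Ioi 0) ∧
    ∫ t in Set.Ioi (0:ℝ), (Real.log t : ℂ) * (Real.exp (-t) : ℂ) = -(Real.eulerMascheroniConstant : ℂ) := by
  have h2 : ∫ t in Set.Ioi (0:ℝ), (Real.log t : ℂ) * (Real.exp (-t) : ℂ) = -(Real.eulerMascheroniConstant : ℂ) := by
    have h1 := Complex.hasDerivAt_GammaIntegral (s := 1) (by simp)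
    have h3 : HasDerivAt Complex.Gamma
        (∫ (t : ℝ) in Set.Ioi 0, (t:ℂ) ^ ((1:ℂ) - 1) * (↑(Real.log t) * ↑(Real.exp (-t)))) 1 := by
      refine h1.congr_of_eventuallyEq ?_
      have : ∀ᶠ s : ℂ in 𝓝 1, 0 < s.re :=
        (isOpen_lt continuous_const Complex.continuous_re).mem_nhds (by simp)
      filter_upwards [this] with s hs using Complex.Gamma_eq_integral hs
    have := h3.unique Complex.hasDerivAt_Gamma_one
    simpa using this
  refine ⟨?_, h2⟩
  by_contra hc
  have := integral_undef hc
  rw [h2] at this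
  have h4 := Real.one_half_lt_eulerMascheroniConstant
  have : (Real.eulerMascheroniConstant : ℂ) = 0 := by simpa using this
  have : Real.eulerMascheroniConstant = 0 := by exact_mod_cast this
  linarith

lemma G_int (h : ℕ) (δ : ℝ) (hδ : 0 < δ) (a : ℂ) (ha : a.re ≤ 0) (hh : 1 ≤ h ∨ a.re < 0) :
    IntegrableOn (fun r : ℝ => ((r : ℂ) ^ (h + 1))⁻¹ * Complex.exp (a * r)) (Set.Ioi δ) := by
  have hm : AEStronglyMeasurable (fun r : ℝ => ((r : ℂ) ^ (h + 1))⁻¹ * Complex.exp (a * r))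
      (volume.restrict (Set.Ioi δ)) := by
    apply Measurable.aestronglyMeasurable
    fun_prop
  rcases hh with hh | hh
  · have h1 : IntegrableOn (fun r : ℝ => r ^ (-((h:ℝ)+1))) (Set.Ioi δ) :=
      integrableOn_Ioi_rpow_of_lt (by have : (1:ℝ) ≤ h := by exact_mod_cast hh
                                      linarith) hδ
    refine h1.mono' hm ?_
    filter_upwards [ae_restrict_mem measurableSet_Ioi] with r hr
    have hr0 : 0 < r := hδ.trans hr
    rw [norm_mul, Complex.norm_exp, norm_inv, norm_pow, Complex.norm_real, Real.norm_eq_abs, abs_of_pos hr0,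
      Real.rpow_neg hr0.le]
    have : r ^ ((h:ℝ)+1) = r ^ (h+1) := by exact_mod_cast Real.rpow_natCast r (h+1)
    rw [this]
    have : Real.exp ((a * r).re) ≤ 1 := by
      rw [Real.exp_le_one_iff]; simp; nlinarith
    exact mul_le_of_le_one_right (by positivity) this
  · refine ((integrableOn_exp_mul_complex_Ioi hh δ).norm.const_mul ((δ ^ (h+1))⁻¹)).mono' hm ?_
    filter_upwards [ae_restrict_mem measurableSet_Ioi] with r hr
    have hr0 : 0 < r := hδ.trans hr
    rw [norm_mul, norm_inv, norm_pow, Complex.norm_real, Real.norm_eq_abs, abs_of_pos hr0]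
    have : δ ≤ r := le_of_lt hr
    gcongr

def G (δ : ℝ) (h : ℕ) (u : ℂ) : ℂ := ∫ r in Set.Ioi δ, ((r : ℂ) ^ (h + 1))⁻¹ * Complex.exp (u * r)

lemma G_deriv_aux (h : ℕ) (δ : ℝ) (hδ : 0 < δ) (u : ℂ) (hu : u.re < 0) :
    HasDerivAt (G δ h) (∫ r in Set.Ioi δ, ((r : ℂ) ^ h)⁻¹ * Complex.exp (u * r)) u := by
  have hpos : 0 < -u.re/2 := by linarith
  have key := hasDerivAt_integral_of_dominated_loc_of_deriv_le (μ := volume.restrict (Set.Ioi δ))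
    (bound := fun r : ℝ => (δ ^ h)⁻¹ * ‖Complex.exp (((u.re/2 : ℝ) : ℂ) * r)‖)
    (F := fun u r => ((r : ℂ) ^ (h + 1))⁻¹ * Complex.exp (u * r))
    (F' := fun u r => ((r : ℂ) ^ h)⁻¹ * Complex.exp (u * r)) (x₀ := u)
    (Metric.ball_mem_nhds u hpos)
    (Filter.Eventually.of_forall fun x => by
      apply Measurable.aestronglyMeasurable; fun_prop)
    (G_int h δ hδ u hu.le (Or.inr hu))
    (by apply Measurable.aestronglyMeasurable; fun_prop)
    (by
      filter_upwards [ae_restrict_mem measurableSet_Ioi] with r hr x hx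
      have hr0 : 0 < r := hδ.trans hr
      have hδr : δ ≤ r := le_of_lt hr
      rw [norm_mul, norm_inv, norm_pow, Complex.norm_real, Real.norm_eq_abs, abs_of_pos hr0,
        Complex.norm_exp, Complex.norm_exp]
      have h1 : x.re ≤ u.re/2 := by
        have := (abs_le.1 (Complex.abs_re_le_norm (x - u))).2
        rw [Metric.mem_ball, dist_eq_norm] at hx
        simp at this
        linarith
      have : (x * r).re ≤ (((u.re/2 : ℝ) : ℂ) * r).re := by
        rw [Complex.re_mul_ofReal, Complex.re_mul_ofReal, Complex.ofReal_re]
        gcongr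
      gcongr)
    ((integrableOn_exp_mul_complex_Ioi (by rw [Complex.ofReal_re]; linarith) δ).norm.const_mul _)
    (by
      filter_upwards [ae_restrict_mem measurableSet_Ioi] with r hr x hx
      have hr0 : (r:ℂ) ≠ 0 := by exact_mod_cast (hδ.trans hr).ne'
      have := (((hasDerivAt_id x).mul_const (r:ℂ)).cexp).const_mul (((r : ℂ) ^ (h + 1))⁻¹)
      refine HasDerivAt.congr_deriv this ?_
      simp only [id]
      field_simp
      ring)
  exact key.2

lemma G_deriv_succ (h : ℕ) (δ : ℝ) (hδ : 0 < δ) (u : ℂ) (hu : u.re < 0) :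
    HasDerivAt (G δ (h+1)) (G δ h u) u := G_deriv_aux (h+1) δ hδ u hu

lemma G_deriv_zero (δ : ℝ) (hδ : 0 < δ) (u : ℂ) (hu : u.re < 0) :
    HasDerivAt (G δ 0) (-Complex.exp (u * δ) / u) u := by
  have := G_deriv_aux 0 δ hδ u hu
  simpa [integral_exp_mul_complex_Ioi hu] using this

open Filter Topology in
/-- continuity along horizontal segments up to the imaginary axis -/
lemma G_tendsto (h : ℕ) (hh : 1 ≤ h) (δ : ℝ) (hδ : 0 < δ) (u : ℂ) (hu : u.re = 0) :
    Tendsto (fun ε : ℝ => G δ h (u - ε)) (𝓝[>] 0) (𝓝 (G δ h u)) := by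
  refine tendsto_integral_filter_of_dominated_convergence
    (fun r : ℝ => ‖((r : ℂ) ^ (h + 1))⁻¹ * Complex.exp ((0:ℂ) * r)‖) ?_ ?_ ?_ ?_
  · refine Filter.Eventually.of_forall fun x => ?_
    apply Measurable.aestronglyMeasurable; fun_prop
  · filter_upwards [self_mem_nhdsWithin] with ε hε
    filter_upwards [ae_restrict_mem measurableSet_Ioi] with r hr
    have hr0 : 0 < r := hδ.trans hr
    rw [norm_mul, norm_mul, Complex.norm_exp, Complex.norm_exp]
    have : ((u - ε) * r).re ≤ ((0:ℂ) * r).re := by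
      rw [Complex.re_mul_ofReal, Complex.re_mul_ofReal]
      have : 0 < ε := hε
      simp [hu]; positivity
    gcongr
  · exact (G_int h δ hδ 0 (by simp) (Or.inl hh)).norm
  · refine Filter.Eventually.of_forall fun r => ?_
    have : Continuous (fun ε : ℝ => ((r : ℂ) ^ (h + 1))⁻¹ * Complex.exp ((u - ε) * r)) := by fun_prop
    have := (this.tendsto 0).mono_left (nhdsWithin_le_nhds (s := Set.Ioi 0))
    simpa using this

lemma G_at_zero (h : ℕ) (hh : 1 ≤ h) (δ : ℝ) (hδ : 0 < δ) :
    G δ h 0 = (δ : ℂ) ^ (-(h:ℤ)) / h := by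
  have hh' : (1:ℝ) ≤ h := by exact_mod_cast hh
  have h1 := integral_Ioi_rpow_of_lt (a := -((h:ℝ)+1)) (by linarith) hδ
  have h2 : G δ h 0 = ((∫ r in Set.Ioi δ, r ^ (-((h:ℝ)+1)) : ℝ) : ℂ) := by
    rw [G, ← integral_complex_ofReal]
    refine setIntegral_congr_fun measurableSet_Ioi fun r hr => ?_
    have hr0 : 0 < r := hδ.trans hr
    have : r ^ ((h:ℝ)+1) = r ^ (h+1) := by exact_mod_cast Real.rpow_natCast r (h+1)
    simp only [Real.rpow_neg hr0.le, this]
    simp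
  rw [h2, h1, show (-((h:ℝ)+1)+1) = -(h:ℝ) by ring, Real.rpow_neg hδ.le, Real.rpow_natCast]
  simp

open Filter Topology in
lemma E1_eq (x : ℝ) (hx : 0 < x) : G x 0 (-1) = -((Real.log x : ℂ) * (Real.exp (-x) : ℂ)) +
    ∫ t in Set.Ioi x, (Real.log t : ℂ) * (Real.exp (-t) : ℂ) := by
  have hi : IntegrableOn (fun t : ℝ => (Real.log t : ℂ) * (Real.exp (-t) : ℂ)) (Set.Ioi x) :=
    logexp_integrable.1.mono_set (Set.Ioi_subset_Ioi hx.le)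
  have hg := G_int 0 x hx (-1) (by simp) (Or.inr (by simp))
  have hd : ∀ t ∈ Set.Ioi x, HasDerivAt (fun t : ℝ => (Real.log t : ℂ) * (Real.exp (-t) : ℂ))
      (((t : ℂ) ^ (0 + 1))⁻¹ * Complex.exp (-1 * t) - (Real.log t : ℂ) * (Real.exp (-t) : ℂ)) t := by
    intro t ht
    have h0 : t ≠ 0 := (hx.trans ht).ne'
    have := (((Real.hasDerivAt_log h0).mul ((hasDerivAt_neg t).exp)).ofReal_comp)
    simp only [Pi.mul_apply, Complex.ofReal_mul] at this
    convert this using 1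
    push_cast
    simp
    ring
  have hc : ContinuousWithinAt (fun t : ℝ => (Real.log t : ℂ) * (Real.exp (-t) : ℂ)) (Set.Ici x) x := by
    apply ContinuousAt.continuousWithinAt
    have := Real.continuousAt_log hx.ne'
    fun_prop
  have hz := tendsto_zero_of_hasDerivAt_of_integrableOn_Ioi hd (hg.sub hi) hi
  have := integral_Ioi_of_hasDerivAt_of_tendsto hc hd (hg.sub hi) hz
  rw [integral_sub hg hi] at this
  rw [G]
  linear_combination this

lemma G_scale (δ ε : ℝ) (hε : 0 < ε) : G δ 0 (-(ε:ℂ)) = G (ε * δ) 0 (-1) := by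
  have := integral_comp_mul_left_Ioi (fun r : ℝ => ((r : ℂ) ^ (0 + 1))⁻¹ * Complex.exp (-1 * r)) δ hε
  have h0 : (ε:ℂ) ≠ 0 := by exact_mod_cast hε.ne'
  rw [G, G]
  have h2 : ∫ r in Set.Ioi δ, ((r : ℂ) ^ (0 + 1))⁻¹ * Complex.exp (-(ε:ℂ) * r) =
     (ε:ℂ) * ∫ x in Set.Ioi δ, (((ε * x : ℝ) : ℂ) ^ (0 + 1))⁻¹ * Complex.exp (-1 * ((ε * x : ℝ):ℂ)) := by
    rw [← integral_const_mul]
    congr 1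
    ext r
    push_cast
    rw [show -1 * ((ε:ℂ) * r) = -(ε:ℂ) * r by ring, ← mul_assoc]
    congr 1
    field_simp
  rw [h2, this, Complex.real_smul]
  push_cast
  field_simp

open Filter Topology in
lemma G_zero_limit (δ : ℝ) (hδ : 0 < δ) :
    Tendsto (fun ε : ℝ => G δ 0 (-(ε:ℂ)) + (Real.log ε : ℂ) + (Real.log δ : ℂ)) (𝓝[>] 0)
      (𝓝 (-(Real.eulerMascheroniConstant : ℂ))) := by
  have hx : Tendsto (fun ε : ℝ => ε * δ) (𝓝[>] 0) (𝓝 0) := by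
    have : Continuous (fun ε : ℝ => ε * δ) := by fun_prop
    simpa using (this.tendsto 0).mono_left (nhdsWithin_le_nhds (s := Set.Ioi 0))
  have h1 : Tendsto (fun ε : ℝ => ∫ t in Set.Ioi (ε * δ), (Real.log t : ℂ) * (Real.exp (-t) : ℂ))
      (𝓝[>] 0) (𝓝 (-(Real.eulerMascheroniConstant : ℂ))) := by
    rw [← logexp_integrable.2]
    have := (aecover_Ioi_of_Ioi (μ := volume) hx).integral_tendsto_of_countably_generated logexp_integrable.1
    refine this.congr' ?_
    filter_upwards [self_mem_nhdsWithin] with ε hε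
    have : 0 < ε * δ := mul_pos hε hδ
    rw [Measure.restrict_restrict measurableSet_Ioi, Set.inter_eq_left.2 (Set.Ioi_subset_Ioi this.le)]
  have h2 : Tendsto (fun x : ℝ => Real.log x * (1 - Real.exp (-x))) (𝓝[>] 0) (𝓝 0) := by
    have h3 : Tendsto (fun x : ℝ => |x * Real.log x|) (𝓝[>] 0) (𝓝 0) := by
      have := (Real.continuous_mul_log.abs.tendsto 0).mono_left (nhdsWithin_le_nhds (s := Set.Ioi 0))
      simpa using this
    refine squeeze_zero_norm' ?_ h3
    filter_upwards [self_mem_nhdsWithin] with x hx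
    have hx : 0 < x := hx
    rw [Real.norm_eq_abs, abs_mul, abs_mul, mul_comm]
    have a1 := Real.add_one_le_exp (-x)
    have a2 : Real.exp (-x) ≤ 1 := by rw [Real.exp_le_one_iff]; linarith
    gcongr
    linarith
  have hx' : Tendsto (fun ε : ℝ => ε * δ) (𝓝[>] 0) (𝓝[>] 0) := by
    refine tendsto_nhdsWithin_iff.2 ⟨hx, ?_⟩
    filter_upwards [self_mem_nhdsWithin] with ε hε using mul_pos hε hδ
  have h4 := (Complex.continuous_ofReal.tendsto 0).comp (h2.comp hx')
  have h5 := h4.add h1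
  rw [Complex.ofReal_zero, zero_add] at h5
  refine h5.congr' ?_
  filter_upwards [self_mem_nhdsWithin] with ε hε
  have hε : 0 < ε := hε
  rw [G_scale δ ε hε, E1_eq _ (mul_pos hε hδ)]
  simp only [Function.comp]
  rw [Real.log_mul hε.ne' hδ.ne']
  push_cast
  ring

lemma fact_bound (h : ℕ) (k : ℕ) (x : ℝ) (hx : 0 ≤ x) :
    x / (((k : ℝ) + 1) * ((k + h).factorial : ℝ)) ≤ x / (k.factorial : ℝ) := by
  have h1 : (k.factorial : ℝ) ≤ ((k + h).factorial : ℝ) := by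
    exact_mod_cast Nat.factorial_le (Nat.le_add_right k h)
  have h2 : 0 < (k.factorial : ℝ) := by exact_mod_cast Nat.factorial_pos k
  have h3 : (0:ℝ) ≤ k := Nat.cast_nonneg k
  gcongr
  nlinarith

def T (δ : ℝ) (h : ℕ) (u : ℂ) : ℂ :=
  ∑' k : ℕ, u ^ (k + h + 1) * (δ : ℂ) ^ (k + 1) / (((k : ℂ) + 1) * ((k + h + 1).factorial : ℂ))

lemma nrm_den (k h : ℕ) : ‖(((k : ℂ) + 1) * ((k + h).factorial : ℂ))‖ =
    ((k : ℝ) + 1) * ((k + h).factorial : ℝ) := by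
  rw [norm_mul, Complex.norm_natCast]
  congr 1
  exact_mod_cast Complex.norm_natCast (k + 1)

lemma summable_main (h : ℕ) (z : ℂ) : Summable (fun k : ℕ =>
      ‖z ^ k / (((k : ℂ) + 1) * ((k + h + 1).factorial : ℂ))‖) := by
  refine Summable.of_nonneg_of_le (fun k => norm_nonneg _) (fun k => ?_)
    (Real.summable_pow_div_factorial ‖z‖)
  rw [norm_div, norm_pow, add_assoc, nrm_den]
  exact fact_bound _ _ _ (by positivity)

lemma T_summable (δ : ℝ) (h : ℕ) (u : ℂ) : Summable (fun k : ℕ =>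
    u ^ (k + h + 1) * (δ : ℂ) ^ (k + 1) / (((k : ℂ) + 1) * ((k + h + 1).factorial : ℂ))) := by
  have := ((summable_main h (u * δ)).of_norm).mul_left (u ^ (h+1) * δ)
  refine this.congr fun k => ?_
  rw [mul_pow]
  ring

lemma T_eq (δ : ℝ) (h : ℕ) (u : ℂ) : T δ h u = (δ : ℂ) * u ^ (h + 1) *
    ∑' k : ℕ, ((δ : ℂ) * u) ^ k / (((k : ℂ) + 1) * ((k + h + 1).factorial : ℂ)) := by
  rw [T, ← tsum_mul_left]
  refine tsum_congr fun k => ?_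
  rw [mul_pow]
  ring

lemma T_deriv_aux (δ : ℝ) (hδ : 0 < δ) (h : ℕ) (u : ℂ) : HasDerivAt (T δ h)
    (∑' k : ℕ, u ^ (k + h) * (δ : ℂ) ^ (k + 1) / (((k : ℂ) + 1) * ((k + h).factorial : ℂ))) u := by
  have hu : u ∈ Metric.ball (0:ℂ) (‖u‖ + 1) := by simp
  refine hasDerivAt_tsum_of_isPreconnected
    (g := fun (k : ℕ) (u : ℂ) => u ^ (k + h + 1) * (δ : ℂ) ^ (k + 1) / (((k : ℂ) + 1) * ((k + h + 1).factorial : ℂ)))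
    (g' := fun (k : ℕ) (u : ℂ) => u ^ (k + h) * (δ : ℂ) ^ (k + 1) / (((k : ℂ) + 1) * ((k + h).factorial : ℂ)))
    (u := fun k : ℕ => ((‖u‖ + 1) ^ h * δ) * (((‖u‖ + 1) * δ) ^ k / (k.factorial : ℝ)))
    ((Real.summable_pow_div_factorial _).mul_left _) Metric.isOpen_ball
    (convex_ball _ _).isPreconnected ?_ ?_ hu (T_summable δ h u) hu
  · intro k y hy
    have := ((hasDerivAt_pow (k + h + 1) y).mul_const ((δ : ℂ) ^ (k + 1))).div_const
      (((k : ℂ) + 1) * ((k + h + 1).factorial : ℂ))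
    refine HasDerivAt.congr_deriv this ?_
    rw [Nat.factorial_succ]
    have h1 : ((k + h).factorial : ℂ) ≠ 0 := by exact_mod_cast Nat.factorial_ne_zero _
    have h2 : (k : ℂ) + 1 ≠ 0 := by exact_mod_cast Nat.succ_ne_zero k
    have h3 : (k : ℂ) + h + 1 ≠ 0 := by exact_mod_cast Nat.succ_ne_zero (k + h)
    push_cast
    field_simp
  · intro k y hy
    have hy' : ‖y‖ ≤ ‖u‖ + 1 := by
      have := mem_ball_zero_iff.1 hy
      exact this.le
    rw [norm_div, nrm_den, norm_mul, norm_pow, norm_pow, Complex.norm_real, Real.norm_eq_abs, abs_of_pos hδ]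
    refine (fact_bound _ _ _ (by positivity)).trans ?_
    have : (‖u‖ + 1) ^ h * δ * (((‖u‖ + 1) * δ) ^ k / (k.factorial : ℝ)) =
      (‖u‖ + 1) ^ (k + h) * δ ^ (k + 1) / (k.factorial : ℝ) := by
      rw [mul_pow]; ring
    rw [this]
    gcongr

lemma T_deriv_succ (δ : ℝ) (hδ : 0 < δ) (h : ℕ) (u : ℂ) : HasDerivAt (T δ (h+1)) (T δ h u) u :=
  T_deriv_aux δ hδ (h+1) u

lemma T_deriv_zero (δ : ℝ) (hδ : 0 < δ) (u : ℂ) (hu : u ≠ 0) :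
    HasDerivAt (T δ 0) ((Complex.exp (u * δ) - 1) / u) u := by
  have := T_deriv_aux δ hδ 0 u
  refine HasDerivAt.congr_deriv this (Eq.symm ?_)
  have h1 : HasSum (fun n : ℕ => (u * δ) ^ n / (n.factorial : ℂ)) (Complex.exp (u * δ)) := by
    rw [Complex.exp_eq_exp_ℂ]
    exact NormedSpace.expSeries_div_hasSum_exp (u * δ)
  have h2 := ((hasSum_nat_add_iff' 1).2 h1).div_const u
  simp only [Finset.range_one, Finset.sum_singleton, pow_zero, Nat.factorial_zero, Nat.cast_one, div_one] at h2
  rw [← h2.tsum_eq]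
  refine tsum_congr fun k => ?_
  rw [Nat.factorial_succ]
  push_cast
  have h2 : (k : ℂ) + 1 ≠ 0 := by exact_mod_cast Nat.succ_ne_zero k
  rw [mul_pow, add_zero]
  field_simp
  ring

lemma T_zero (δ : ℝ) (h : ℕ) : T δ h 0 = 0 := by
  rw [T_eq]; simp

lemma T_cont (δ : ℝ) (hδ : 0 < δ) (h : ℕ) : Continuous (T δ h) :=
  continuous_iff_continuousAt.2 fun u => (T_deriv_aux δ hδ h u).continuousAt

def P (δ : ℝ) (h : ℕ) (u : ℂ) : ℂ := ∑ k ∈ Finset.range h,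
  u ^ k / (k.factorial : ℂ) * ((δ : ℂ) ^ ((k : ℤ) - (h : ℤ)) / ((h : ℂ) - (k : ℂ)))

lemma P_deriv (δ : ℝ) (h : ℕ) (u : ℂ) : HasDerivAt (P δ (h+1)) (P δ h u) u := by
  have h0 : P δ (h+1) = fun u => ∑ k ∈ Finset.range h,
      u ^ (k+1) / ((k+1).factorial : ℂ) * ((δ : ℂ) ^ ((k : ℤ) - (h : ℤ)) / ((h : ℂ) - (k : ℂ)))
      + (δ : ℂ) ^ (-((h+1 : ℕ) : ℤ)) / ((h + 1 : ℕ) : ℂ) := by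
    ext u
    rw [P, Finset.sum_range_succ']
    congr 1
    · refine Finset.sum_congr rfl fun k _ => ?_
      have e1 : (((k + 1 : ℕ) : ℤ) - ((h + 1 : ℕ) : ℤ)) = (k : ℤ) - (h : ℤ) := by push_cast; ring
      have e2 : (((h + 1 : ℕ) : ℂ) - ((k + 1 : ℕ) : ℂ)) = (h : ℂ) - (k : ℂ) := by push_cast; ring
      rw [e1, e2]
    · simp
  rw [h0]
  refine HasDerivAt.add_const _ ?_
  rw [P]
  refine HasDerivAt.fun_sum fun k _ => ?_
  have := ((hasDerivAt_pow (k+1) u).div_const ((k+1).factorial : ℂ)).mul_const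
    ((δ : ℂ) ^ ((k : ℤ) - (h : ℤ)) / ((h : ℂ) - (k : ℂ)))
  refine HasDerivAt.congr_deriv this ?_
  rw [Nat.factorial_succ]
  have h1 : (k.factorial : ℂ) ≠ 0 := by exact_mod_cast Nat.factorial_ne_zero _
  have h2 : (k : ℂ) + 1 ≠ 0 := by exact_mod_cast Nat.succ_ne_zero k
  push_cast
  field_simp

lemma P_cont (δ : ℝ) (h : ℕ) : Continuous (P δ h) := by
  unfold P; fun_prop

lemma P_zero (δ : ℝ) (h : ℕ) : P δ (h+1) 0 = (δ : ℂ) ^ (-((h+1 : ℕ) : ℤ)) / ((h + 1 : ℕ) : ℂ) := by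
  rw [P, Finset.sum_range_succ', Finset.sum_eq_zero] <;> simp

def Q (δ : ℝ) (h : ℕ) (u : ℂ) : ℂ := u ^ h / (h.factorial : ℂ) *
  (-Complex.log (-u) + ∑ j ∈ Finset.Icc 1 h, ((j : ℂ))⁻¹ -
    ((Real.eulerMascheroniConstant : ℂ) + (Real.log δ : ℂ)))

lemma slit (u : ℂ) (hu : u.re < 0) : -u ∈ Complex.slitPlane := by
  left; simpa using hu

lemma nz (u : ℂ) (hu : u.re < 0) : u ≠ 0 := by
  rintro rfl; simp at hu

lemma log_deriv (u : ℂ) (hu : u.re < 0) : HasDerivAt (fun u : ℂ => Complex.log (-u)) (u⁻¹) u := by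
  have := (hasDerivAt_neg u).clog (slit u hu)
  refine HasDerivAt.congr_deriv this ?_
  have := nz u hu
  field_simp

lemma Q_deriv_succ (δ : ℝ) (h : ℕ) (u : ℂ) (hu : u.re < 0) : HasDerivAt (Q δ (h+1)) (Q δ h u) u := by
  have := ((hasDerivAt_pow (h+1) u).div_const ((h+1).factorial : ℂ)).fun_mul
    (((log_deriv u hu).fun_neg.add_const (∑ j ∈ Finset.Icc 1 (h+1), ((j : ℂ))⁻¹)).sub_const
    ((Real.eulerMascheroniConstant : ℂ) + (Real.log δ : ℂ)))
  refine HasDerivAt.congr_deriv this ?_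
  have := nz u hu
  rw [Q, Finset.sum_Icc_succ_top (by omega), Nat.factorial_succ]
  have h1 : (h.factorial : ℂ) ≠ 0 := by exact_mod_cast Nat.factorial_ne_zero _
  have h2 : (h : ℂ) + 1 ≠ 0 := by exact_mod_cast Nat.succ_ne_zero h
  push_cast
  field_simp
  ring

lemma Q_deriv_zero (δ : ℝ) (u : ℂ) (hu : u.re < 0) : HasDerivAt (Q δ 0) (-u⁻¹) u := by
  have := ((log_deriv u hu).fun_neg.sub_const
    ((Real.eulerMascheroniConstant : ℂ) + (Real.log δ : ℂ)))
  have e : Q δ 0 = fun x => -Complex.log (-x) - ((Real.eulerMascheroniConstant : ℂ) + (Real.log δ : ℂ)) := by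
    ext u
    simp [Q]
  rw [e]
  exact this

def D (δ : ℝ) (h : ℕ) (u : ℂ) : ℂ := G δ h u - Q δ h u - P δ h u + T δ h u

open Filter Topology in
lemma D_eq_zero_of (f : ℂ → ℂ) (hd : ∀ u : ℂ, u.re < 0 → HasDerivAt f 0 u)
    (hl : Tendsto (fun ε : ℝ => f (-(ε:ℂ))) (𝓝[>] 0) (𝓝 0)) (u : ℂ) (hu : u.re < 0) : f u = 0 := by
  have ho : IsOpen {u : ℂ | u.re < 0} := isOpen_lt Complex.continuous_re continuous_const
  have hc : IsPreconnected {u : ℂ | u.re < 0} := (convex_halfSpace_re_lt 0).isPreconnected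
  have hconst := fun v (hv : v.re < 0) => ho.is_const_of_deriv_eq_zero hc
    (fun x hx => (hd x hx).differentiableAt.differentiableWithinAt)
    (fun x hx => (hd x hx).deriv) (x := u) (y := v) hu hv
  refine tendsto_nhds_unique (tendsto_const_nhds.congr' ?_) hl
  filter_upwards [self_mem_nhdsWithin] with ε hε
  exact hconst _ (by simpa using hε)

open Filter Topology in
lemma neg_tendsto : Tendsto (fun ε : ℝ => -(ε:ℂ)) (𝓝[>] 0) (𝓝 0) := by
  have : Continuous (fun ε : ℝ => -(ε:ℂ)) := by fun_prop
  simpa using (this.tendsto 0).mono_left (nhdsWithin_le_nhds (s := Set.Ioi 0))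

open Filter Topology in
lemma Q_limit (δ : ℝ) (h : ℕ) : Tendsto (fun ε : ℝ => Q δ (h+1) (-(ε:ℂ))) (𝓝[>] 0) (𝓝 0) := by
  have h1 : Tendsto (fun x : ℝ => ((x * Real.log x : ℝ) : ℂ)) (𝓝[>] 0) (𝓝 0) := by
    have := ((Complex.continuous_ofReal.comp Real.continuous_mul_log).tendsto 0).mono_left
      (nhdsWithin_le_nhds (s := Set.Ioi 0))
    simpa [Function.comp_def] using this
  have h2 : Tendsto (fun ε : ℝ => (-(ε:ℂ))^h / ((h+1).factorial : ℂ)) (𝓝[>] 0)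
      (𝓝 (0 ^ h / ((h+1).factorial : ℂ))) := (neg_tendsto.pow h).div_const _
  have h3 := h2.mul (h1.add (neg_tendsto.mul_const (∑ j ∈ Finset.Icc 1 (h+1), ((j : ℂ))⁻¹ -
    ((Real.eulerMascheroniConstant : ℂ) + (Real.log δ : ℂ)))))
  rw [zero_mul, add_zero, mul_zero] at h3
  refine h3.congr' ?_
  filter_upwards [self_mem_nhdsWithin] with ε hε
  have hε : 0 < ε := hε
  rw [Q, neg_neg, ← Complex.ofReal_log hε.le]
  push_cast
  ring

open Filter Topology in
lemma D_zero (δ : ℝ) (hδ : 0 < δ) (h : ℕ) : ∀ u : ℂ, u.re < 0 → D δ h u = 0 := by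
  induction h with
  | zero =>
    refine D_eq_zero_of _ ?_ ?_
    · intro u hu
      have := ((((G_deriv_zero δ hδ u hu).fun_sub (Q_deriv_zero δ u hu)).fun_sub
        (hasDerivAt_const u (P δ 0 0))).fun_add (T_deriv_zero δ hδ u (nz u hu)))
      refine HasDerivAt.congr_deriv this ?_
      have := nz u hu
      field_simp
      ring
    · have h1 := (G_zero_limit δ hδ).add_const (Real.eulerMascheroniConstant : ℂ)
      have h2 := h1.add (((T_cont δ hδ 0).tendsto 0).comp neg_tendsto)
      rw [T_zero, neg_add_cancel, zero_add] at h2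
      refine h2.congr' ?_
      filter_upwards [self_mem_nhdsWithin] with ε hε
      have hε : 0 < ε := hε
      simp only [D, Q, P, Function.comp, neg_neg, ← Complex.ofReal_log hε.le]
      simp
      ring
  | succ h ih =>
    refine D_eq_zero_of _ ?_ ?_
    · intro u hu
      have := ((((G_deriv_succ h δ hδ u hu).fun_sub (Q_deriv_succ δ h u hu)).fun_sub
        (P_deriv δ h u)).fun_add (T_deriv_succ δ hδ h u))
      refine HasDerivAt.congr_deriv this ?_
      exact ih u hu
    · have h1 := G_tendsto (h+1) (by omega) δ hδ 0 (by simp)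
      simp only [zero_sub] at h1
      have h2 := ((h1.sub (Q_limit δ h)).sub (((P_cont δ (h+1)).tendsto 0).comp neg_tendsto)).add
        (((T_cont δ hδ (h+1)).tendsto 0).comp neg_tendsto)
      rw [T_zero, P_zero, G_at_zero _ (by omega) δ hδ, sub_zero, sub_self, zero_add] at h2
      exact h2

open Filter Topology in
lemma D_bdry (δ : ℝ) (hδ : 0 < δ) (h : ℕ) (hh : 1 ≤ h) (u : ℂ) (hu : u.re = 0) (hu0 : u.im ≠ 0) :
    D δ h u = 0 := by
  have hn : Tendsto (fun ε : ℝ => u - (ε:ℂ)) (𝓝[>] 0) (𝓝 u) := by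
    have : Continuous (fun ε : ℝ => u - (ε:ℂ)) := by fun_prop
    simpa using (this.tendsto 0).mono_left (nhdsWithin_le_nhds (s := Set.Ioi 0))
  have hQ : ContinuousAt (Q δ h) u := by
    have : ContinuousAt (fun u : ℂ => Complex.log (-u)) u := by
      refine ContinuousAt.clog (by fun_prop) ?_
      right; simpa using hu0
    unfold Q
    fun_prop
  have h2 := (((G_tendsto h hh δ hδ u hu).sub (hQ.tendsto.comp hn)).sub
    (((P_cont δ h).tendsto u).comp hn)).add (((T_cont δ hδ h).tendsto u).comp hn)
  refine tendsto_nhds_unique h2 (tendsto_const_nhds.congr' ?_)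
  filter_upwards [self_mem_nhdsWithin] with ε hε
  have hε : 0 < ε := hε
  exact (D_zero δ hδ h (u - ε) (by simpa [hu] using hε)).symm

/-- Renormalized oscillatory integral identity for the
Morrey kernels `J_{-h-1}`. -/
theorem renormalized_oscillatory_integral_identity
    (h : ℕ) (hh : 1 ≤ h) (δ : ℝ) (hδ : 0 < δ) (w : ℝ) (hw : w ≠ 0) :
    IntegrableOn
      (fun r : ℝ => ((r : ℂ) ^ (h + 1))⁻¹ * Complex.exp (Complex.I * w * r))
      (Set.Ioi δ) ∧
    Summable (fun k : ℕ =>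
      ‖((δ : ℂ) * Complex.I * w) ^ k /
        (((k : ℂ) + 1) * ((k + h + 1).factorial : ℂ))‖) ∧
    ((h.factorial : ℂ))⁻¹ * (Complex.I * w) ^ h *
        (-Complex.log (-(Complex.I * w)) + ∑ j ∈ Finset.Icc 1 h, ((j : ℂ))⁻¹) =
      (∫ r in Set.Ioi δ, ((r : ℂ) ^ (h + 1))⁻¹ * Complex.exp (Complex.I * w * r)) +
        (Complex.I ^ h / (h.factorial : ℂ)) * (w : ℂ) ^ h *
          ((Real.eulerMascheroniConstant : ℂ) + (Real.log δ : ℂ)) -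
        (∑ k ∈ Finset.range h,
          (Complex.I ^ k / (k.factorial : ℂ)) * (w : ℂ) ^ k *
            ((δ : ℂ) ^ ((k : ℤ) - (h : ℤ)) / ((h : ℂ) - (k : ℂ)))) +
        (δ : ℂ) * (Complex.I * w) ^ (h + 1) *
          ∑' k : ℕ, ((δ : ℂ) * Complex.I * w) ^ k /
            (((k : ℂ) + 1) * ((k + h + 1).factorial : ℂ)) := by

  refine ⟨G_int h δ hδ _ (by simp) (Or.inl hh), summable_main h _, ?_⟩
  have key := D_bdry δ hδ h hh (Complex.I * w) (by simp) (by simpa using hw)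
  rw [D, T_eq, G, Q, P] at key
  have e : ∀ k : ℕ, Complex.I ^ k / (k.factorial : ℂ) * (w : ℂ) ^ k =
      (Complex.I * w) ^ k / (k.factorial : ℂ) := fun k => by rw [mul_pow]; ring
  simp only [e, mul_assoc (δ : ℂ) Complex.I (w : ℂ)]
  linear_combination -key
end
end
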